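/- arXiv:1812.07550 — 2 statements merged into one kernel-verified Lean document; each statement's English description precedes it below -/
import Mathlib

section
/- (Göllnitz–Gordon) For every nonnegative integer n, A(n) = B(n), where A(n) is the number of partitions of n into parts which are distinct, nonconsecutive integers such that no two consecutive even integers appear (equivalently, partitions whose parts in decreasing order satisfy γ_i − γ_{i+1} ≥ 2, with γ_i − γ_{i+1} ≥ 3 whenever γ_i is even), and B(n) is the number of partitions of n into parts congruent to 1, 4, or 7 modulo 8. -/
/-- The parts of `p` sorted in weakly increasing order. -/
def sortedParts {n : ℕ} (p : n.Partition) : List ℕ := p.parts.sort (· ≤ ·)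

/-- A partition is a Göllnitz–Gordon partition if its parts, in decreasing order
`γ₁ ≥ γ₂ ≥ ⋯`, satisfy `γ_i - γ_{i+1} ≥ 2`, with `γ_i - γ_{i+1} ≥ 3` whenever `γ_i`
is even.  (In the increasing sorted list `l`, the larger of two consecutive parts
`l_i ≤ l_{i+1}` plays the role of `γ_i`.)  In particular the parts are distinct and
nonconsecutive, and no two consecutive even integers appear. -/
def IsGG {n : ℕ} (p : n.Partition) : Prop :=
  ∀ i : ℕ, ∀ h : i + 1 < (sortedParts p).length,
    2 ≤ (sortedParts p).get ⟨i + 1, h⟩ - (sortedParts p).get ⟨i, Nat.lt_of_succ_lt h⟩ ∧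
    (Even ((sortedParts p).get ⟨i + 1, h⟩) →
      3 ≤ (sortedParts p).get ⟨i + 1, h⟩ - (sortedParts p).get ⟨i, Nat.lt_of_succ_lt h⟩)

/-- `A n` is the number of Göllnitz–Gordon partitions of `n`. -/
noncomputable def A (n : ℕ) : ℕ := Nat.card {p : n.Partition // IsGG p}

/-- `B n` is the number of partitions of `n` into parts congruent to `1`, `4`, or `7`
modulo `8`. -/
noncomputable def B (n : ℕ) : ℕ :=
  Nat.card {p : n.Partition // ∀ a ∈ p.parts, a % 8 = 1 ∨ a % 8 = 4 ∨ a % 8 = 7}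

/-!
The generating function of the Göllnitz–Gordon partitions with all parts greater than `2j` satisfies
`D_j = (1 + q^{2j+1}) D_{j+1} + q^{2j+2} D_{j+2}` (does `2j + 1` occur, does `2j + 2` occur?) and
tends to `1` as `j → ∞`; these two facts determine it. Multiplied by `(q²; q²)_∞`, Andrews'
hypergeometric series `J_{2,2}(-q⁻¹; q^{2j}; q²)` satisfies the same recurrence, by two termwise
telescoping identities, and has the same limit up to this factor. At `j = 0` the series collapses to
`(-q; q²)_∞ ∑_{k ∈ ℤ} (-1)^k q^{4k² + k}`, where the Jacobi triple product turns the theta series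
into `(q³; q⁸)_∞ (q⁵; q⁸)_∞ (q⁸; q⁸)_∞`. The triple product itself is the limit of a symmetric form
of the finite `q`-binomial theorem. Elementary product manipulations modulo `8` then give
`1 / ((q; q⁸)_∞ (q⁴; q⁸)_∞ (q⁷; q⁸)_∞)`, the generating function of the product side.
-/

open Finset PowerSeries Filter
open scoped PowerSeries.WithPiTopology

namespace GollnitzGordon

section Topology

variable {R : Type*} [CommRing R]

theorem eq_of_forall_X_pow_dvd_sub {a b : R⟦X⟧} (h : ∀ N, X ^ N ∣ a - b) : a = b := by
  ext n
  simpa [sub_eq_zero] using X_pow_dvd_iff.mp (h (n + 1)) n n.lt_succ_self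

theorem tendsto_order_of_X_pow_dvd {f : ℕ → R⟦X⟧} (hf : ∀ i, X ^ i ∣ f i) :
    Tendsto (fun i ↦ (f i).order) atTop (nhds ⊤) :=
  ENat.tendsto_nhds_top_iff_natCast_lt.mpr fun n ↦ eventually_atTop.mpr ⟨n + 1, fun i hi ↦
    (Nat.cast_lt.mpr hi).trans_le (nat_le_order _ _ (X_pow_dvd_iff.mp (hf i)))⟩

theorem X_pow_dvd_prod_sub_one {ι : Type*} {m : ℕ} {f : ι → R⟦X⟧} (hf : ∀ i, X ^ m ∣ f i - 1)
    (s : Finset ι) : X ^ m ∣ ∏ i ∈ s, f i - 1 :=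
  prod_induction f (fun g ↦ X ^ m ∣ g - 1)
    (fun a b ha hb ↦ by simpa using dvd_mul_sub_mul ha hb) (by simp) fun i _ ↦ hf i

variable [TopologicalSpace R]

theorem summable_of_X_pow_dvd {f : ℕ → R⟦X⟧} (hf : ∀ i, X ^ i ∣ f i) : Summable f :=
  WithPiTopology.summable_of_tendsto_order_atTop_nhds_top R (tendsto_order_of_X_pow_dvd hf)

theorem multipliable_of_X_pow_dvd_sub_one {f : ℕ → R⟦X⟧} (hf : ∀ i, X ^ i ∣ f i - 1) :
    Multipliable f := by
  simpa using WithPiTopology.multipliable_one_add_of_tendsto_order_atTop_nhds_top R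
    (tendsto_order_of_X_pow_dvd hf)

theorem isClosed_setOf_X_pow_dvd_sub [T2Space R] (m : ℕ) (c : R⟦X⟧) :
    IsClosed {f : R⟦X⟧ | X ^ m ∣ f - c} := by
  simp only [X_pow_dvd_iff, map_sub, sub_eq_zero, Set.ofPred_forall]
  exact isClosed_iInter fun n ↦ isClosed_iInter fun _ ↦
    isClosed_eq (WithPiTopology.continuous_coeff R n) continuous_const

theorem X_pow_dvd_tsum [T2Space R] {m : ℕ} {f : ℕ → R⟦X⟧} (hf : ∀ i, X ^ m ∣ f i) :
    X ^ m ∣ ∑' i, f i := by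
  by_cases hs : Summable f
  · have hmem := (isClosed_setOf_X_pow_dvd_sub m 0).mem_of_tendsto hs.hasSum
      (.of_forall fun s ↦ by simpa using dvd_sum fun i _ ↦ hf i)
    simpa using hmem
  · simp [tsum_eq_zero_of_not_summable hs]

theorem X_pow_dvd_tprod_sub_one [T2Space R] {m : ℕ} {f : ℕ → R⟦X⟧}
    (hf : ∀ i, X ^ m ∣ f i - 1) : X ^ m ∣ ∏' i, f i - 1 := by
  by_cases hm : Multipliable f
  · exact (isClosed_setOf_X_pow_dvd_sub m 1).mem_of_tendsto hm.hasProd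
      (.of_forall (X_pow_dvd_prod_sub_one hf))
  · simp [tprod_eq_one_of_not_multipliable hm]

theorem X_pow_dvd_tsum_sub_sum_range [T2Space R] [IsTopologicalRing R] {m n : ℕ} {f : ℕ → R⟦X⟧}
    (hs : Summable f) (hf : ∀ i, X ^ m ∣ f (i + n)) : X ^ m ∣ ∑' i, f i - ∑ i ∈ range n, f i := by
  rw [← hs.sum_add_tsum_nat_add n, add_sub_cancel_left]
  exact X_pow_dvd_tsum hf

theorem tprod_eq_prod_tprod_mul_add [T2Space R] [IsTopologicalRing R] {f : ℕ → R⟦X⟧}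
    (hf : ∀ i, X ^ i ∣ f i - 1) (N : ℕ) [NeZero N] :
    ∏' i, f i = ∏ r : Fin N, ∏' k, f (k * N + r) := by
  have hprod : HasProd (f ∘ (Nat.divModEquiv N).symm) (∏' i, f i) :=
    (Nat.divModEquiv N).symm.hasProd_iff.mpr (multipliable_of_X_pow_dvd_sub_one hf).hasProd
  have hclass (r : Fin N) : Multipliable fun k ↦ f (k * N + r) :=
    multipliable_of_X_pow_dvd_sub_one fun k ↦
      (pow_dvd_pow X ((Nat.le_mul_of_pos_right k (NeZero.pos N)).trans
        (Nat.le_add_right _ _))).trans (hf _)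
  rw [← Multipliable.tprod_finsetProd fun r _ ↦ hclass r]
  exact (hprod.prod_fiberwise fun k ↦ hasProd_fintype _).tprod_eq.symm

theorem tsum_eq_tsum_of_sub_eq_sub_succ {G : Type*} [AddCommGroup G] [TopologicalSpace G]
    [IsTopologicalAddGroup G] [T2Space G] {f g A : ℕ → G} (hf : Summable f) (hg : Summable g)
    (hA : Summable A) (hA₀ : A 0 = 0) (h : ∀ n, f n - g n = A n - A (n + 1)) :
    ∑' n, f n = ∑' n, g n := by
  have hsucc : ∑' n, A n = ∑' n, A (n + 1) := by rw [hA.tsum_eq_zero_add, hA₀, zero_add]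
  rw [← sub_eq_zero, ← hf.tsum_sub hg, tsum_congr h,
    hA.tsum_sub ((summable_nat_add_iff 1).mpr hA), hsucc, sub_self]

end Topology

section QPochhammer

variable {R : Type*} [CommRing R]

theorem X_pow_dvd_mul_pow {Q : R⟦X⟧} (hQ : X ∣ Q) (a : R⟦X⟧) (i : ℕ) : X ^ i ∣ a * Q ^ i :=
  (pow_dvd_pow_of_dvd hQ i).mul_left a

theorem X_pow_dvd_one_sub_sub_one {m : ℕ} {f : R⟦X⟧} (hf : X ^ m ∣ f) : X ^ m ∣ 1 - f - 1 := by
  simpa using hf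

variable [TopologicalSpace R]

/-- The infinite `q`-Pochhammer symbol `(a; Q)_∞ = ∏_{i ≥ 0} (1 - a Q^i)`. -/
noncomputable def qPochInf (a Q : R⟦X⟧) : R⟦X⟧ := ∏' i : ℕ, (1 - a * Q ^ i)

theorem multipliable_one_sub_mul_pow {Q : R⟦X⟧} (hQ : X ∣ Q) (a : R⟦X⟧) :
    Multipliable fun i : ℕ ↦ 1 - a * Q ^ i :=
  multipliable_of_X_pow_dvd_sub_one fun i ↦ X_pow_dvd_one_sub_sub_one (X_pow_dvd_mul_pow hQ a i)

theorem qPochInf_eq_prod_mul [T2Space R] [IsTopologicalRing R] {Q : R⟦X⟧} (hQ : X ∣ Q)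
    (a : R⟦X⟧) (n : ℕ) :
    qPochInf a Q = (∏ i ∈ range n, (1 - a * Q ^ i)) * qPochInf (a * Q ^ n) Q := by
  have hshift : Multipliable fun i ↦ 1 - a * Q ^ (i + n) := by
    simpa only [pow_add, mul_assoc, mul_comm (Q ^ n)] using
      multipliable_one_sub_mul_pow hQ (a * Q ^ n)
  rw [qPochInf, ← hshift.prod_mul_tprod_nat_mul' (f := fun i ↦ 1 - a * Q ^ i), qPochInf]
  simp only [pow_add, mul_assoc, mul_comm (Q ^ n)]

theorem X_pow_dvd_qPochInf_sub_one [T2Space R] {m : ℕ} {a : R⟦X⟧} (ha : X ^ m ∣ a) (Q : R⟦X⟧) :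
    X ^ m ∣ qPochInf a Q - 1 :=
  X_pow_dvd_tprod_sub_one fun i ↦ X_pow_dvd_one_sub_sub_one (ha.mul_right (Q ^ i))

theorem X_pow_dvd_qPochInf_sub_prod [T2Space R] [IsTopologicalRing R] {Q : R⟦X⟧} (hQ : X ∣ Q)
    (a : R⟦X⟧) (n : ℕ) : X ^ n ∣ qPochInf a Q - ∏ i ∈ range n, (1 - a * Q ^ i) := by
  rw [qPochInf_eq_prod_mul hQ a n, ← mul_sub_one]
  exact (X_pow_dvd_qPochInf_sub_one (X_pow_dvd_mul_pow hQ a n) Q).mul_left _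

theorem qPochInf_ne_zero [T2Space R] [Nontrivial R] {a : R⟦X⟧} (ha : X ∣ a) (Q : R⟦X⟧) :
    qPochInf a Q ≠ 0 := by
  intro h
  have hdvd := X_pow_dvd_qPochInf_sub_one (m := 1) (by simpa using ha) Q
  simp [h, X_dvd_iff] at hdvd

theorem qPochInf_eq_prod_fin [T2Space R] [IsTopologicalRing R] {Q : R⟦X⟧} (hQ : X ∣ Q)
    (a : R⟦X⟧) (N : ℕ) [NeZero N] :
    qPochInf a Q = ∏ r : Fin N, qPochInf (a * Q ^ (r : ℕ)) (Q ^ N) := by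
  rw [qPochInf, tprod_eq_prod_tprod_mul_add
    (fun i ↦ X_pow_dvd_one_sub_sub_one (X_pow_dvd_mul_pow hQ a i)) N]
  refine prod_congr rfl fun r _ ↦ tprod_congr fun k ↦ ?_
  ring

theorem qPochInf_mul_qPochInf_neg [T2Space R] [IsTopologicalRing R] {Q : R⟦X⟧} (hQ : X ∣ Q)
    (a : R⟦X⟧) : qPochInf a Q * qPochInf (-a) Q = qPochInf (a ^ 2) (Q ^ 2) := by
  rw [qPochInf, qPochInf, ← (multipliable_one_sub_mul_pow hQ a).tprod_mul
    (multipliable_one_sub_mul_pow hQ (-a))]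
  exact tprod_congr fun i ↦ by ring

end QPochhammer

section GaussBinomial

variable {R : Type*} [CommRing R]

/-- The Gaussian binomial coefficient `[n, k]_Q`, evaluated at an element `Q` of a ring and defined
through its Pascal recursion so that no division is needed. -/
def gaussBinom (Q : R) : ℕ → ℕ → R
  | _, 0 => 1
  | 0, _ + 1 => 0
  | n + 1, k + 1 => gaussBinom Q n k + Q ^ (k + 1) * gaussBinom Q n (k + 1)

@[simp]
theorem gaussBinom_zero_right (Q : R) (n : ℕ) : gaussBinom Q n 0 = 1 := by
  cases n <;> rfl

theorem gaussBinom_succ_succ (Q : R) (n k : ℕ) :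
    gaussBinom Q (n + 1) (k + 1) = gaussBinom Q n k + Q ^ (k + 1) * gaussBinom Q n (k + 1) :=
  rfl

theorem gaussBinom_eq_zero_of_lt (Q : R) {n k : ℕ} (h : n < k) : gaussBinom Q n k = 0 := by
  induction n generalizing k with
  | zero => obtain ⟨k, rfl⟩ := Nat.exists_eq_succ_of_ne_zero h.ne'; rfl
  | succ n ih =>
    obtain ⟨k, rfl⟩ := Nat.exists_eq_succ_of_ne_zero h.ne_bot
    rw [Nat.succ_eq_add_one, gaussBinom_succ_succ, ih (by omega), ih (by omega), mul_zero, add_zero]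

theorem sum_gaussBinom_succ_mul (Q : R) (n : ℕ) (f : ℕ → R) :
    ∑ k ∈ range (n + 2), gaussBinom Q (n + 1) k * f k =
      ∑ k ∈ range (n + 1), gaussBinom Q n k * (f (k + 1) + Q ^ k * f k) := by
  have hshift : ∑ k ∈ range (n + 1), Q ^ (k + 1) * gaussBinom Q n (k + 1) * f (k + 1) + f 0 =
      ∑ k ∈ range (n + 1), Q ^ k * gaussBinom Q n k * f k := by
    have h := sum_range_succ' (fun k ↦ Q ^ k * gaussBinom Q n k * f k) (n + 1)
    rw [sum_range_succ, gaussBinom_eq_zero_of_lt Q n.lt_succ_self] at h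
    simpa using h.symm
  rw [sum_range_succ', gaussBinom_zero_right, one_mul]
  simp only [gaussBinom_succ_succ, add_mul, sum_add_distrib, add_assoc, hshift, mul_add]
  congr 1
  exact sum_congr rfl fun k _ ↦ by ring

theorem prod_one_sub_mul_pow_eq_sum_gaussBinom (a Q : R) (n : ℕ) :
    ∏ i ∈ range n, (1 - a * Q ^ i) =
      ∑ k ∈ range (n + 1), gaussBinom Q n k * ((-a) ^ k * Q ^ k.choose 2) := by
  induction n generalizing a with
  | zero => simp
  | succ n ih =>
    have hpeel : ∏ i ∈ range n, (1 - a * Q ^ (i + 1)) = ∏ i ∈ range n, (1 - a * Q * Q ^ i) :=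
      prod_congr rfl fun i _ ↦ by ring
    rw [prod_range_succ', hpeel, ih, sum_gaussBinom_succ_mul, sum_mul]
    refine sum_congr rfl fun k _ ↦ ?_
    rw [Nat.choose_succ_succ' k 1, Nat.choose_one_right]
    ring

theorem gaussBinom_add_mul_prod (Q : R) (m k : ℕ) :
    gaussBinom Q (m + k) k * ∏ i ∈ range k, (1 - Q ^ (i + 1)) =
      ∏ i ∈ range k, (1 - Q ^ (m + i + 1)) := by
  induction k generalizing m with
  | zero => simp
  | succ k ihk =>
    have hsplit (m : ℕ) : ∏ i ∈ range (k + 1), (1 - Q ^ (m + i + 1)) =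
        (∏ i ∈ range k, (1 - Q ^ (m + 1 + i + 1))) * (1 - Q ^ (m + 1)) := by
      rw [prod_range_succ', add_zero]
      simp only [add_right_comm, ← add_assoc]
    induction m with
    | zero =>
      have hdiag := ihk 0
      simp only [zero_add] at hdiag ⊢
      rw [gaussBinom_succ_succ, gaussBinom_eq_zero_of_lt Q k.lt_succ_self, mul_zero, add_zero,
        prod_range_succ, ← mul_assoc, hdiag]
    | succ m ihm =>
      have htop := prod_range_succ (fun i ↦ 1 - Q ^ (m + 1 + i + 1)) k
      rw [hsplit m] at ihm
      rw [htop, ← add_assoc, gaussBinom_succ_succ, add_mul, mul_assoc (Q ^ (k + 1)),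
        show m + 1 + k = m + (k + 1) by ring, ihm, prod_range_succ, ← mul_assoc,
        show m + (k + 1) = m + 1 + k by ring, ihk (m + 1)]
      ring

end GaussBinomial

section JacobiTripleProduct

variable {R : Type*} [CommRing R]

/-- The terms of Ramanujan's theta series `∑_{k ∈ ℤ} (-1)^k a^{k(k+1)/2} b^{k(k-1)/2}`, written with
natural exponents so that they make sense in any ring. -/
def theta (a b : R) : ℤ → R
  | .ofNat k => (-a) ^ k * (a * b) ^ k.choose 2
  | .negSucc k => (-b) ^ (k + 1) * (a * b) ^ (k + 1).choose 2

theorem theta_natCast (a b : R) (k : ℕ) : theta a b k = (-a) ^ k * (a * b) ^ k.choose 2 :=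
  rfl

theorem theta_neg_natCast (a b : R) (k : ℕ) :
    theta a b (-k) = (-b) ^ k * (a * b) ^ k.choose 2 := by
  cases k with
  | zero => simp [theta]
  | succ k => exact congrArg (theta a b) (Int.negSucc_eq k).symm

theorem pow_mul_theta_sub_one (a b : R) (k n : ℕ) :
    (a * b) ^ k * theta a b (k - n - 1) = -b * (a * b) ^ n * theta a b (k - n) := by
  have hchoose (d : ℕ) : (d + 1).choose 2 = d + d.choose 2 := by
    rw [Nat.choose_succ_succ' d 1, Nat.choose_one_right]
  rcases le_or_gt k n with h | h
  · obtain ⟨d, rfl⟩ := Nat.exists_eq_add_of_le h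
    rw [show (k : ℤ) - ↑(k + d) - 1 = -((d + 1 : ℕ) : ℤ) by push_cast; ring,
      show (k : ℤ) - ↑(k + d) = -(d : ℤ) by push_cast; ring, theta_neg_natCast,
      theta_neg_natCast, hchoose]
    ring
  · obtain ⟨d, rfl⟩ := Nat.exists_eq_add_of_lt h
    rw [show (↑(n + d + 1) : ℤ) - n - 1 = (d : ℕ) by push_cast; ring,
      show (↑(n + d + 1) : ℤ) - n = (d + 1 : ℕ) by push_cast; ring, theta_natCast,
      theta_natCast, hchoose]
    ring

theorem prod_mul_prod_eq_sum_gaussBinom_mul_theta (a b : R) (m n : ℕ) :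
    (∏ i ∈ range m, (1 - a * (a * b) ^ i)) * ∏ i ∈ range n, (1 - b * (a * b) ^ i) =
      ∑ k ∈ range (m + n + 1), gaussBinom (a * b) (m + n) k * theta a b (k - n) := by
  induction n with
  | zero => simpa [theta_natCast] using prod_one_sub_mul_pow_eq_sum_gaussBinom a (a * b) m
  | succ n ih =>
    rw [prod_range_succ, ← mul_assoc, ih, sum_mul, ← add_assoc, sum_gaussBinom_succ_mul]
    refine sum_congr rfl fun k _ ↦ ?_
    have hstep := pow_mul_theta_sub_one a b k n
    rw [show (↑(k + 1) : ℤ) - ↑(n + 1) = k - n by push_cast; ring,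
      show (k : ℤ) - ↑(n + 1) = k - n - 1 by push_cast; ring, hstep]
    ring

theorem prod_mul_prod_eq_sum_symm (a b : R) (N : ℕ) :
    (∏ i ∈ range N, (1 - a * (a * b) ^ i)) * ∏ i ∈ range (N + 1), (1 - b * (a * b) ^ i) =
      ∑ k ∈ range (N + 1), (gaussBinom (a * b) (N - k + (N + 1 + k)) (N + 1 + k) * theta a b k +
        gaussBinom (a * b) (N + 1 + k + (N - k)) (N - k) * theta a b (-(k + 1 : ℕ))) := by
  rw [prod_mul_prod_eq_sum_gaussBinom_mul_theta, show N + (N + 1) + 1 = N + 1 + (N + 1) by ring,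
    sum_range_add, ← sum_range_reflect _ (N + 1), add_comm, ← sum_add_distrib]
  refine sum_congr rfl fun k hk ↦ ?_
  have hkN : k ≤ N := Nat.lt_succ_iff.mp (mem_range.mp hk)
  rw [show N - k + (N + 1 + k) = N + (N + 1) by omega,
    show N + 1 + k + (N - k) = N + (N + 1) by omega, show N + 1 - 1 - k = N - k by omega,
    show (↑(N + 1 + k) : ℤ) - ↑(N + 1) = k by push_cast; ring,
    show (↑(N - k) : ℤ) - ↑(N + 1) = -(k + 1 : ℕ) by omega]

end JacobiTripleProduct

section JacobiTripleProductLimit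

variable {R : Type*} [CommRing R]

theorem X_pow_dvd_theta {a b : R⟦X⟧} (ha : X ∣ a) (k : ℕ) : X ^ k ∣ theta a b k := by
  rw [theta_natCast]
  exact (pow_dvd_pow_of_dvd ((dvd_neg (α := R⟦X⟧)).mpr ha) k).mul_right _

theorem X_pow_dvd_theta_neg {a b : R⟦X⟧} (hb : X ∣ b) (k : ℕ) : X ^ k ∣ theta a b (-k) := by
  rw [theta_neg_natCast]
  exact (pow_dvd_pow_of_dvd ((dvd_neg (α := R⟦X⟧)).mpr hb) k).mul_right _

theorem X_pow_dvd_theta_add_theta_neg {a b : R⟦X⟧} (ha : X ∣ a) (hb : X ∣ b) (k : ℕ) :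
    X ^ k ∣ theta a b k + theta a b (-(k + 1 : ℕ)) :=
  dvd_add (X_pow_dvd_theta ha k)
    ((pow_dvd_pow X k.le_succ).trans (X_pow_dvd_theta_neg hb (k + 1)))

variable [TopologicalSpace R] [IsTopologicalRing R] [T2Space R]

theorem X_pow_dvd_qPochInf_mul_gaussBinom_sub_one {Q : R⟦X⟧} (hQ : X ∣ Q) {d m k : ℕ}
    (hm : d ≤ m + 1) (hk : d ≤ k + 1) :
    X ^ d ∣ qPochInf Q Q * gaussBinom Q (m + k) k - 1 := by
  have hpow {i : ℕ} (hi : d ≤ i) : X ^ d ∣ Q ^ i :=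
    (pow_dvd_pow X hi).trans (pow_dvd_pow_of_dvd hQ i)
  have hsplit : qPochInf Q Q * gaussBinom Q (m + k) k =
      (∏ i ∈ range k, (1 - Q ^ (m + i + 1))) * qPochInf (Q ^ (k + 1)) Q := by
    rw [qPochInf_eq_prod_mul hQ Q k, ← gaussBinom_add_mul_prod]
    simp only [← pow_succ']
    ring
  rw [hsplit]
  simpa using dvd_mul_sub_mul
    (X_pow_dvd_prod_sub_one (fun i ↦ X_pow_dvd_one_sub_sub_one (hpow (by omega))) _)
    (X_pow_dvd_qPochInf_sub_one (hpow hk) Q)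

theorem tsum_theta_eq_qPochInf_mul {a b : R⟦X⟧} (ha : X ∣ a) (hb : X ∣ b) :
    ∑' k : ℕ, (theta a b k + theta a b (-(k + 1 : ℕ))) =
      qPochInf a (a * b) * qPochInf b (a * b) * qPochInf (a * b) (a * b) := by
  have hQ : X ∣ a * b := ha.mul_right b
  refine eq_of_forall_X_pow_dvd_sub fun N ↦ ?_
  have hterm := X_pow_dvd_theta_add_theta_neg ha hb
  have hseries := X_pow_dvd_tsum_sub_sum_range (m := N) (n := N + 1) (summable_of_X_pow_dvd hterm)
    fun k ↦ (pow_dvd_pow X (by omega)).trans (hterm _)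
  have hproduct : X ^ N ∣ qPochInf a (a * b) * qPochInf b (a * b) -
      (∏ i ∈ range N, (1 - a * (a * b) ^ i)) * ∏ i ∈ range (N + 1), (1 - b * (a * b) ^ i) :=
    dvd_mul_sub_mul (X_pow_dvd_qPochInf_sub_prod hQ a N) <|
      (pow_dvd_pow X N.le_succ).trans (X_pow_dvd_qPochInf_sub_prod hQ b (N + 1))
  have hbinom : X ^ N ∣ qPochInf (a * b) (a * b) *
      ((∏ i ∈ range N, (1 - a * (a * b) ^ i)) * ∏ i ∈ range (N + 1), (1 - b * (a * b) ^ i)) -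
        ∑ k ∈ range (N + 1), (theta a b k + theta a b (-(k + 1 : ℕ))) := by
    rw [prod_mul_prod_eq_sum_symm, mul_sum, ← sum_sub_distrib]
    refine dvd_sum fun k hk ↦ ?_
    have hkN : k + (N - k) = N := by have := mem_range.mp hk; omega
    have hpos := mul_dvd_mul (X_pow_dvd_theta (b := b) ha k) <|
      X_pow_dvd_qPochInf_mul_gaussBinom_sub_one hQ (d := N - k) (m := N - k) (k := N + 1 + k)
        (by omega) (by omega)
    have hneg := mul_dvd_mul
      ((pow_dvd_pow X k.le_succ).trans (X_pow_dvd_theta_neg (a := a) hb (k + 1))) <|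
      X_pow_dvd_qPochInf_mul_gaussBinom_sub_one hQ (d := N - k) (m := N + 1 + k) (k := N - k)
        (by omega) (by omega)
    rw [← pow_add, hkN] at hpos hneg
    exact (dvd_add hpos hneg).trans (dvd_of_eq (by ring))
  have htotal := dvd_add (dvd_sub hseries hbinom)
    ((hproduct.mul_left (qPochInf (a * b) (a * b))).neg_right)
  exact htotal.trans (dvd_of_eq (by ring))

end JacobiTripleProductLimit

section GordonSeries

theorem two_mul_choose_two_add (n : ℕ) : 2 * n.choose 2 + n = n ^ 2 := by
  induction n with
  | zero => rfl
  | succ n ih => rw [Nat.choose_succ_succ' n 1, Nat.choose_one_right]; nlinarith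

variable (R : Type*) [CommRing R]

theorem theta_X_pow_add_theta_neg (n : ℕ) :
    theta (X ^ 5 : R⟦X⟧) (X ^ 3) n + theta (X ^ 5) (X ^ 3) (-(n + 1 : ℕ)) =
      (-1) ^ n * X ^ (4 * n ^ 2 + n) * (1 - X ^ (6 * n + 3)) := by
  have hsq := two_mul_choose_two_add n
  have hsq' := two_mul_choose_two_add (n + 1)
  have hpos : 5 * n + 8 * n.choose 2 = 4 * n ^ 2 + n := by omega
  have hneg : 3 * (n + 1) + 8 * (n + 1).choose 2 = 4 * n ^ 2 + n + (6 * n + 3) := by nlinarith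
  rw [theta_natCast, theta_neg_natCast, neg_pow, neg_pow (X ^ 3), ← pow_add, ← pow_mul, ← pow_mul,
    ← pow_mul, ← pow_mul, mul_assoc, ← pow_add, mul_assoc, ← pow_add, hpos, hneg]
  ring

variable [TopologicalSpace R]

/-- The common factor
`(-1)^n q^{4n² + n + 4nj} (-q; q²)_n (q^{2n+2}; q²)_j (-q^{2n+2j+3}; q²)_∞` of the `n`-th terms of
`gordonH₁` and `gordonH₂`, where `q = X`. -/
noncomputable def gordonFactor (n j : ℕ) : R⟦X⟧ :=
  (-1) ^ n * X ^ (4 * n ^ 2 + n + 4 * n * j) * (∏ i ∈ range n, (1 + X ^ (2 * i + 1))) *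
    (∏ i ∈ range j, (1 - X ^ (2 * (n + i + 1)))) * qPochInf (-X ^ (2 * (n + j + 1) + 1)) (X ^ 2)

/-- Andrews' series `H_{2,1}(-q⁻¹; q^{2j+2}; q²)`, multiplied by `(q²; q²)_∞` to clear denominators,
where `q = X`. -/
noncomputable def gordonH₁ (j : ℕ) : R⟦X⟧ :=
  ∑' n : ℕ, gordonFactor R n j * (X ^ (2 * n) * (1 - X ^ (2 * (j + 1 + 2 * n))))

/-- Andrews' series `H_{2,2}(-q⁻¹; q^{2j+2}; q²)`, multiplied by `(q²; q²)_∞` to clear denominators,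
where `q = X`. -/
noncomputable def gordonH₂ (j : ℕ) : R⟦X⟧ :=
  ∑' n : ℕ, gordonFactor R n j * (1 - X ^ (4 * (j + 1 + 2 * n)))

/-- Andrews' series `J_{2,2}(-q⁻¹; q^{2j}; q²)`, multiplied by `(q²; q²)_∞` to clear denominators,
where `q = X`. -/
noncomputable def gordonJ (j : ℕ) : R⟦X⟧ :=
  gordonH₂ R j + X ^ (2 * j + 1) * gordonH₁ R j

theorem X_pow_dvd_gordonFactor_mul (n j : ℕ) (f : R⟦X⟧) :
    X ^ (n + n * j) ∣ gordonFactor R n j * f := by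
  have hexp : n + n * j ≤ 4 * n ^ 2 + n + 4 * n * j := by nlinarith [Nat.zero_le (n * j)]
  exact ((((pow_dvd_pow X hexp).mul_left _).mul_right _).mul_right _).mul_right _ |>.mul_right _

theorem summable_gordonFactor_mul (j : ℕ) (c : ℕ → R⟦X⟧) :
    Summable fun n ↦ gordonFactor R n j * c n :=
  summable_of_X_pow_dvd fun n ↦
    (pow_dvd_pow X (Nat.le_add_right _ _)).trans (X_pow_dvd_gordonFactor_mul R n j (c n))

theorem mul_gordonFactor_succ_left (n j : ℕ) :
    (1 - X ^ (2 * (n + 1))) * gordonFactor R (n + 1) j =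
      -X ^ (4 * n + 4 * j + 5) * (1 + X ^ (2 * n + 1)) * gordonFactor R n (j + 1) := by
  simp only [gordonFactor, prod_range_succ' _ j, prod_range_succ _ n, add_zero,
    ← add_assoc, add_right_comm _ 1]
  ring

variable [IsTopologicalRing R] [T2Space R]

theorem qPochInf_neg_X_pow_two_mul_add_one (m : ℕ) :
    qPochInf (-X ^ (2 * m + 1) : R⟦X⟧) (X ^ 2) =
      (1 + X ^ (2 * m + 1)) * qPochInf (-X ^ (2 * (m + 1) + 1)) (X ^ 2) := by
  rw [qPochInf_eq_prod_mul (dvd_pow_self X two_ne_zero) _ 1]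
  simp only [prod_range_one, pow_zero, mul_one, sub_neg_eq_add, pow_one, neg_mul]
  ring_nf

theorem mul_gordonFactor_eq_mul_gordonFactor_succ_right (n j : ℕ) :
    X ^ (4 * n) * (1 - X ^ (2 * (n + j + 1))) * gordonFactor R n j =
      (1 + X ^ (2 * (n + j + 1) + 1)) * gordonFactor R n (j + 1) := by
  simp only [gordonFactor, qPochInf_neg_X_pow_two_mul_add_one R (n + j + 1),
    prod_range_succ _ j, ← add_assoc n j 1]
  ring

theorem gordonH₁_eq_gordonJ_succ (j : ℕ) : gordonH₁ R j = gordonJ R (j + 1) := by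
  have hsum := summable_gordonFactor_mul R (j + 1)
  rw [gordonJ, gordonH₁, gordonH₂, gordonH₁, ← (hsum _).tsum_mul_left,
    ← (hsum _).tsum_add ((hsum _).mul_left _)]
  refine tsum_eq_tsum_of_sub_eq_sub_succ (summable_gordonFactor_mul R j _)
    ((hsum _).add ((hsum _).mul_left _))
    (summable_gordonFactor_mul R j fun n ↦ X ^ (2 * n) * (1 - X ^ (2 * n))) (by simp) fun n ↦ ?_
  linear_combination mul_gordonFactor_eq_mul_gordonFactor_succ_right R n j +
    X ^ (2 * (n + 1)) * mul_gordonFactor_succ_left R n j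

theorem gordonH₂_eq_gordonH₁_add (j : ℕ) :
    gordonH₂ R j = gordonH₁ R j + X ^ (2 * j + 2) * gordonH₁ R (j + 1) := by
  have hsum := summable_gordonFactor_mul R j
  have hsum' := summable_gordonFactor_mul R (j + 1)
  rw [gordonH₂, gordonH₁, gordonH₁, ← (hsum' _).tsum_mul_left,
    ← (hsum _).tsum_add ((hsum' _).mul_left _)]
  refine tsum_eq_tsum_of_sub_eq_sub_succ (hsum _) ((hsum _).add ((hsum' _).mul_left _))
    (hsum fun n ↦ 1 - X ^ (2 * n)) (by simp) fun n ↦ ?_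
  linear_combination X ^ (2 * n + 2 * j + 2) * mul_gordonFactor_eq_mul_gordonFactor_succ_right R n j
    + mul_gordonFactor_succ_left R n j

theorem gordonJ_eq_add (j : ℕ) :
    gordonJ R j =
      (1 + X ^ (2 * j + 1)) * gordonJ R (j + 1) + X ^ (2 * j + 2) * gordonJ R (j + 2) := by
  rw [gordonJ, gordonH₂_eq_gordonH₁_add, gordonH₁_eq_gordonJ_succ, gordonH₁_eq_gordonJ_succ]
  ring

theorem X_pow_dvd_gordonFactor_zero_sub_qPochInf (j : ℕ) :
    X ^ j ∣ gordonFactor R 0 j - qPochInf (X ^ 2) (X ^ 2) := by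
  have hfactor : gordonFactor R 0 j = (∏ i ∈ range j, (1 - X ^ 2 * (X ^ 2) ^ i)) *
      qPochInf (-X ^ (2 * j + 3)) (X ^ 2) := by
    simp only [gordonFactor, ← pow_mul, ← pow_add]
    ring_nf
  have hprod := X_pow_dvd_qPochInf_sub_prod (dvd_pow_self (X : R⟦X⟧) two_ne_zero) (X ^ 2) j
  have htail : X ^ j ∣ qPochInf (-X ^ (2 * j + 3) : R⟦X⟧) (X ^ 2) - 1 :=
    X_pow_dvd_qPochInf_sub_one (dvd_neg.mpr (pow_dvd_pow X (by omega))) _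
  rw [hfactor, ← mul_one (qPochInf (X ^ 2) _)]
  exact dvd_mul_sub_mul ((dvd_sub_comm).mp hprod) htail

theorem X_pow_dvd_gordonJ_sub_qPochInf (j : ℕ) :
    X ^ j ∣ gordonJ R j - qPochInf (X ^ 2) (X ^ 2) := by
  have htail : X ^ j ∣ gordonH₂ R j - gordonFactor R 0 j * (1 - X ^ (4 * (j + 1))) := by
    have h := X_pow_dvd_tsum_sub_sum_range (m := j) (n := 1)
      (summable_gordonFactor_mul R j fun n ↦ 1 - X ^ (4 * (j + 1 + 2 * n))) fun n ↦
        (pow_dvd_pow X (by nlinarith)).trans (X_pow_dvd_gordonFactor_mul R (n + 1) j _)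
    rwa [sum_range_one, mul_zero, add_zero] at h
  have hsmall : X ^ j ∣ X ^ (2 * j + 1) * gordonH₁ R j - gordonFactor R 0 j * X ^ (4 * (j + 1)) :=
    dvd_sub ((pow_dvd_pow X (by omega)).mul_right _) ((pow_dvd_pow X (by omega)).mul_left _)
  have htotal := dvd_add (dvd_add htail hsmall) (X_pow_dvd_gordonFactor_zero_sub_qPochInf R j)
  exact htotal.trans (dvd_of_eq (by rw [gordonJ]; ring))

theorem gordonFactor_zero_right_mul (n : ℕ) :
    gordonFactor R n 0 * (1 + X ^ (2 * n + 1)) =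
      qPochInf (-X) (X ^ 2) * ((-1) ^ n * X ^ (4 * n ^ 2 + n)) := by
  have hsplit := qPochInf_eq_prod_mul (dvd_pow_self (X : R⟦X⟧) two_ne_zero) (-X) (n + 1)
  simp only [neg_mul, sub_neg_eq_add, ← pow_mul, ← pow_succ', prod_range_succ] at hsplit
  rw [hsplit, gordonFactor]
  ring_nf

theorem gordonJ_zero :
    gordonJ R 0 = qPochInf (-X) (X ^ 2) *
      (qPochInf (X ^ 3) (X ^ 8) * qPochInf (X ^ 5) (X ^ 8) * qPochInf (X ^ 8) (X ^ 8)) := by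
  have hJTP := tsum_theta_eq_qPochInf_mul (dvd_pow_self (X : R⟦X⟧) (n := 5) (by norm_num))
    (dvd_pow_self X (n := 3) (by norm_num))
  have hsum := summable_gordonFactor_mul R 0
  rw [← pow_add] at hJTP
  rw [mul_comm (qPochInf (X ^ 3) _), ← hJTP, gordonJ, gordonH₁, gordonH₂, ← (hsum _).tsum_mul_left,
    ← (hsum _).tsum_add ((hsum _).mul_left _), ← Summable.tsum_mul_left]
  · refine tsum_congr fun n ↦ ?_
    rw [theta_X_pow_add_theta_neg]
    linear_combination (1 - X ^ (6 * n + 3)) * gordonFactor_zero_right_mul R n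
  · exact summable_of_X_pow_dvd (X_pow_dvd_theta_add_theta_neg (dvd_pow_self _ (by norm_num))
      (dvd_pow_self _ (by norm_num)))

end GordonSeries

section GapSets

/-- The difference condition of the Göllnitz–Gordon theorem on consecutive parts `a < b`. It is
meant for `a ≤ b` but also rules out `b ≤ a`, by truncated subtraction. -/
def Gap (a b : ℕ) : Prop := 2 ≤ b - a ∧ (Even b → 3 ≤ b - a)

instance : DecidableRel Gap := fun _ _ ↦ inferInstanceAs (Decidable (_ ∧ _))

theorem Gap.lt {a b : ℕ} (h : Gap a b) : a < b := by
  have := h.1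
  omega

instance : IsTrans ℕ Gap where
  trans a b c hab hbc := by
    have := hab.1
    have := hbc.1
    exact ⟨by omega, fun _ ↦ by omega⟩

/-- Any two elements of `s` satisfy the difference condition, the smaller one coming first; these
are the sets of parts of Göllnitz–Gordon partitions. -/
def IsGapSet (s : Finset ℕ) : Prop := (s : Set ℕ).Pairwise (Relation.SymmGen Gap)

theorem isGapSet_insert {a : ℕ} {s : Finset ℕ} (ha : ∀ b ∈ s, a < b) :
    IsGapSet (insert a s) ↔ IsGapSet s ∧ ∀ b ∈ s, Gap a b := by
  rw [IsGapSet, coe_insert, Set.pairwise_insert_of_symm]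
  refine and_congr_right fun _ ↦ forall₂_congr fun b hb ↦ ?_
  have hab : a < b := ha b hb
  exact ⟨fun h ↦ (h hab.ne).resolve_right fun hba ↦ hab.not_gt hba.lt, fun h _ ↦ .of_rel h⟩

theorem pairwise_gap_iff {l : List ℕ} (hl : l.Pairwise (· ≤ ·)) :
    l.Pairwise Gap ↔ l.Nodup ∧ IsGapSet l.toFinset := by
  have hsymm : l.Pairwise Gap ↔ l.Pairwise fun a b ↦ a ≠ b ∧ Relation.SymmGen Gap a b := by
    refine ⟨fun h ↦ h.imp fun h ↦ ⟨h.lt.ne, .of_rel h⟩, fun h ↦ (hl.and h).imp ?_⟩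
    rintro a b ⟨hle, -, hab | hba⟩
    · exact hab
    · exact absurd hba.lt hle.not_gt
  rw [hsymm, List.pairwise_and_iff]
  exact and_congr_right fun hnodup ↦
    (List.pairwise_iff_coe_toFinset_pairwise hnodup).symm

theorem isGG_iff {n : ℕ} (p : n.Partition) :
    IsGG p ↔ p.parts.Nodup ∧ IsGapSet p.parts.toFinset := by
  have hsort : (sortedParts p : Multiset ℕ) = p.parts := Multiset.sort_eq p.parts (· ≤ ·)
  have hsorted : (sortedParts p).Pairwise (· ≤ ·) := Multiset.pairwise_sort p.parts (· ≤ ·)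
  have hchain : IsGG p ↔ (sortedParts p).IsChain Gap := by
    rw [List.isChain_iff_getElem]
    rfl
  rw [hchain, List.isChain_iff_pairwise, pairwise_gap_iff hsorted, ← hsort, Multiset.coe_nodup,
    List.toFinset_coe]

variable (R : Type*) [CommRing R]

open Classical in
/-- The generating polynomial, by sum of elements, of the subsets of `S` satisfying the
Göllnitz–Gordon difference condition. -/
noncomputable def gapSum (S : Finset ℕ) : R⟦X⟧ :=
  ∑ t ∈ S.powerset with IsGapSet t, X ^ ∑ i ∈ t, i

theorem gapSum_empty : gapSum R ∅ = 1 := by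
  classical
  rw [gapSum, powerset_empty, sum_filter, sum_singleton]
  simp [IsGapSet]

theorem gapSum_insert {a : ℕ} {S : Finset ℕ} (ha : ∀ b ∈ S, a < b) :
    gapSum R (insert a S) = gapSum R S + X ^ a * gapSum R {b ∈ S | Gap a b} := by
  classical
  have hnot : a ∉ S := fun h ↦ (ha a h).false
  have hsets : {t ∈ S.powerset | IsGapSet (insert a t)} =
      {t ∈ ({b ∈ S | Gap a b} : Finset ℕ).powerset | IsGapSet t} := by
    ext t
    simp only [mem_filter, mem_powerset]
    refine ⟨fun ⟨hsub, h⟩ ↦ ?_, fun ⟨hsub, hset⟩ ↦ ?_⟩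
    · obtain ⟨hset, hgap⟩ := (isGapSet_insert fun b hb ↦ ha b (hsub hb)).mp h
      exact ⟨fun b hb ↦ mem_filter.mpr ⟨hsub hb, hgap b hb⟩, hset⟩
    · have hgap : ∀ b ∈ t, Gap a b := fun b hb ↦ (mem_filter.mp (hsub hb)).2
      exact ⟨hsub.trans (filter_subset _ _),
        (isGapSet_insert fun b hb ↦ (hgap b hb).lt).mpr ⟨hset, hgap⟩⟩
  simp only [gapSum]
  rw [sum_filter, sum_powerset_insert hnot, ← sum_filter, ← sum_filter, hsets, mul_sum]
  congr 1
  refine sum_congr rfl fun t ht ↦ ?_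
  have hsub : t ⊆ S := (mem_powerset.mp (mem_filter.mp ht).1).trans (filter_subset _ _)
  rw [sum_insert fun h ↦ hnot (hsub h), pow_add]

theorem gapSum_Ioc {a N : ℕ} (h : a < N) :
    gapSum R (Ioc a N) =
      gapSum R (Ioc (a + 1) N) + X ^ (a + 1) * gapSum R {b ∈ Ioc (a + 1) N | Gap (a + 1) b} := by
  rw [← insert_Ioc_succ_left_eq_Ioc h]
  exact gapSum_insert R fun b hb ↦ (mem_Ioc.mp hb).1

theorem gapSum_Ioc_two_mul {j M : ℕ} (hj : j < M) :
    gapSum R (Ioc (2 * j) (2 * M)) =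
      (1 + X ^ (2 * j + 1)) * gapSum R (Ioc (2 * (j + 1)) (2 * M)) +
        X ^ (2 * j + 2) * gapSum R (Ioc (2 * (j + 2)) (2 * M)) := by
  have hodd : {b ∈ Ioc (2 * j + 1) (2 * M) | Gap (2 * j + 1) b} = Ioc (2 * j + 2) (2 * M) := by
    ext b
    simp only [mem_filter, mem_Ioc, Gap, Nat.even_iff]
    omega
  have heven : {b ∈ Ioc (2 * j + 2) (2 * M) | Gap (2 * j + 2) b} = Ioc (2 * (j + 2)) (2 * M) := by
    ext b
    simp only [mem_filter, mem_Ioc, Gap, Nat.even_iff]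
    omega
  rw [gapSum_Ioc R (by omega), gapSum_Ioc R (by omega), hodd, heven, mul_add_one]
  ring

theorem coeff_gapSum_Ioc_zero {n N : ℕ} (h : n ≤ N) : coeff n (gapSum R (Ioc 0 N)) = A n := by
  classical
  have hval {p : n.Partition} (hp : IsGG p) : p.parts.toFinset.val = p.parts := by
    rw [Multiset.toFinset_val, ((isGG_iff p).mp hp).1.dedup]
  have hcard : #{p : n.Partition | IsGG p} =
      #{t ∈ {t ∈ (Ioc 0 N).powerset | IsGapSet t} | n = ∑ i ∈ t, i} := by
    refine card_bij (fun p _ ↦ p.parts.toFinset) (fun p hp ↦ ?_) (fun p hp p' hp' heq ↦ ?_)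
      fun t ht ↦ ?_
    · have hGG : IsGG p := (mem_filter.mp hp).2
      have hsub : p.parts.toFinset ⊆ Ioc 0 N := fun i hi ↦ by
        rw [Multiset.mem_toFinset] at hi
        exact mem_Ioc.mpr ⟨p.parts_pos hi, (p.le_of_mem_parts hi).trans h⟩
      have hsum : n = ∑ i ∈ p.parts.toFinset, i := by
        rw [sum_eq_multiset_sum, hval hGG, Multiset.map_id', p.parts_sum]
      simpa only [mem_filter, mem_powerset] using ⟨⟨hsub, ((isGG_iff p).mp hGG).2⟩, hsum⟩
    · rw [Nat.Partition.ext_iff, ← hval (mem_filter.mp hp).2, ← hval (mem_filter.mp hp').2, heq]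
    · simp only [mem_filter, mem_powerset] at ht
      obtain ⟨⟨hsub, hset⟩, hsum⟩ := ht
      let p : n.Partition := ⟨t.val, fun hi ↦ (mem_Ioc.mp (hsub hi)).1, by
        rw [hsum, sum_eq_multiset_sum, Multiset.map_id']⟩
      have hp : p.parts.toFinset = t := t.val_toFinset
      refine ⟨p, mem_filter.mpr ⟨mem_univ p, (isGG_iff p).mpr ⟨t.nodup, ?_⟩⟩, hp⟩
      rwa [hp]
  rw [A, Nat.card_eq_fintype_card, Fintype.card_subtype, hcard, gapSum, map_sum]
  simp only [coeff_X_pow, sum_boole]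

variable [TopologicalSpace R] [IsTopologicalRing R] [T2Space R]

theorem X_pow_dvd_gordonJ_sub_mul_gapSum (M j : ℕ) :
    X ^ M ∣ gordonJ R j - qPochInf (X ^ 2) (X ^ 2) * gapSum R (Ioc (2 * j) (2 * M)) := by
  rcases lt_or_ge j M with hj | hj
  · rw [gordonJ_eq_add, gapSum_Ioc_two_mul R hj]
    have h₁ := (X_pow_dvd_gordonJ_sub_mul_gapSum M (j + 1)).mul_left (1 + X ^ (2 * j + 1))
    have h₂ := (X_pow_dvd_gordonJ_sub_mul_gapSum M (j + 2)).mul_left (X ^ (2 * j + 2))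
    exact (dvd_add h₁ h₂).trans (dvd_of_eq (by ring))
  · rw [Ioc_eq_empty (by omega), gapSum_empty, mul_one]
    exact (pow_dvd_pow X hj).trans (X_pow_dvd_gordonJ_sub_qPochInf R j)
termination_by M - j

theorem qPochInf_mul_mk_A :
    qPochInf (X ^ 2) (X ^ 2) * PowerSeries.mk (fun n ↦ (A n : R)) = gordonJ R 0 := by
  refine eq_of_forall_X_pow_dvd_sub fun M ↦ ?_
  have hmk : X ^ M ∣ PowerSeries.mk (fun n ↦ (A n : R)) - gapSum R (Ioc 0 (2 * M)) := by
    refine X_pow_dvd_iff.mpr fun n hn ↦ ?_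
    rw [map_sub, coeff_mk, coeff_gapSum_Ioc_zero R (by omega), sub_self]
  have hJ := X_pow_dvd_gordonJ_sub_mul_gapSum R M 0
  exact (dvd_sub (hmk.mul_left (qPochInf (X ^ 2) (X ^ 2))) hJ).trans (dvd_of_eq (by ring))

end GapSets

section ProductSide

variable (R : Type*) [CommRing R]

theorem X_pow_dvd_ite_one_sub_X_pow_sub_one (p : ℕ → Prop) [DecidablePred p] (i : ℕ) :
    (X : R⟦X⟧) ^ i ∣ (if p (i + 1) then 1 - X ^ (i + 1) else 1) - 1 := by
  split_ifs
  · exact X_pow_dvd_one_sub_sub_one (pow_dvd_pow X i.le_succ)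
  · simp

variable [TopologicalSpace R] [IsTopologicalRing R] [T2Space R]

theorem mk_card_restricted_mul_tprod (p : ℕ → Prop) [DecidablePred p] :
    PowerSeries.mk (fun n ↦ (#(Nat.Partition.restricted n p) : R)) *
      ∏' i, (if p (i + 1) then 1 - X ^ (i + 1) else 1) = 1 := by
  have hmul := multipliable_of_X_pow_dvd_sub_one (X_pow_dvd_ite_one_sub_X_pow_sub_one R p)
  have hprod := Nat.Partition.hasProd_powerSeriesMk_card_restricted R p
  rw [← hprod.tprod_eq, ← hprod.multipliable.tprod_mul hmul]
  refine (tprod_congr fun i ↦ ?_).trans tprod_one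
  split_ifs
  · simp only [pow_mul]
    exact WithPiTopology.tsum_pow_mul_one_sub_of_constantCoeff_eq_zero (by simp)
  · exact mul_one 1

theorem mk_card_restricted_mul_prod_qPochInf {p : ℕ → Prop} [DecidablePred p] {N : ℕ} [NeZero N]
    (hp : Function.Periodic p N) :
    PowerSeries.mk (fun n ↦ (#(Nat.Partition.restricted n p) : R)) *
      ∏ r : Fin N, (if p (r + 1) then qPochInf (X ^ (r + 1 : ℕ)) (X ^ N) else 1) = 1 := by
  have hperiod (k r : ℕ) : p (k * N + r + 1) = p (r + 1) := by
    rw [add_assoc, add_comm]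
    exact hp.nat_mul k _
  have hclass (r : Fin N) : ∏' k : ℕ,
      (if p (k * N + r + 1) then 1 - (X : R⟦X⟧) ^ (k * N + r + 1) else 1) =
        if p (r + 1) then qPochInf (X ^ (r + 1 : ℕ)) (X ^ N) else 1 := by
    simp only [hperiod]
    split_ifs
    · exact tprod_congr fun k ↦ by ring
    · exact tprod_one
  have h := mk_card_restricted_mul_tprod R p
  rwa [tprod_eq_prod_tprod_mul_add (X_pow_dvd_ite_one_sub_X_pow_sub_one R p) N,
    prod_congr rfl fun r _ ↦ hclass r] at h

theorem mk_B_mul_qPochInf :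
    PowerSeries.mk (fun n ↦ (B n : R)) *
      (qPochInf X (X ^ 8) * qPochInf (X ^ 4) (X ^ 8) * qPochInf (X ^ 7) (X ^ 8)) = 1 := by
  have hB (n : ℕ) :
      B n = #(Nat.Partition.restricted n fun a ↦ a % 8 = 1 ∨ a % 8 = 4 ∨ a % 8 = 7) := by
    rw [B, Nat.card_eq_fintype_card, Fintype.card_subtype, Nat.Partition.restricted]
  have hperiodic : Function.Periodic (fun a ↦ a % 8 = 1 ∨ a % 8 = 4 ∨ a % 8 = 7) 8 := fun a ↦ by
    simp only [Nat.add_mod_right]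
  simpa [hB, Fin.prod_univ_eight] using mk_card_restricted_mul_prod_qPochInf R hperiodic

theorem qPochInf_X_pow_eq_prod_fin (a : ℕ) {b : ℕ} (hb : b ≠ 0) (N : ℕ) [NeZero N] :
    qPochInf (X ^ a : R⟦X⟧) (X ^ b) = ∏ r : Fin N, qPochInf (X ^ (a + b * r)) (X ^ (b * N)) := by
  simp only [pow_add, pow_mul]
  exact qPochInf_eq_prod_fin (dvd_pow_self X hb) (X ^ a) N

theorem qPochInf_mul_mk_B :
    qPochInf (X ^ 2) (X ^ 2) * PowerSeries.mk (fun n ↦ (B n : R)) =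
      qPochInf (-X) (X ^ 2) *
        (qPochInf (X ^ 3) (X ^ 8) * qPochInf (X ^ 5) (X ^ 8) * qPochInf (X ^ 8) (X ^ 8)) := by
  have hodd : qPochInf (X : R⟦X⟧) (X ^ 2) = qPochInf X (X ^ 8) * qPochInf (X ^ 3) (X ^ 8) *
      qPochInf (X ^ 5) (X ^ 8) * qPochInf (X ^ 7) (X ^ 8) := by
    simpa [Fin.prod_univ_four] using qPochInf_X_pow_eq_prod_fin R 1 two_ne_zero 4
  have heven : qPochInf (X ^ 2 : R⟦X⟧) (X ^ 2) = qPochInf (X ^ 2) (X ^ 8) *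
      qPochInf (X ^ 4) (X ^ 8) * qPochInf (X ^ 6) (X ^ 8) * qPochInf (X ^ 8) (X ^ 8) := by
    simpa [Fin.prod_univ_four] using qPochInf_X_pow_eq_prod_fin R 2 two_ne_zero 4
  have htwo : qPochInf (X : R⟦X⟧) (X ^ 2) * qPochInf (-X) (X ^ 2) =
      qPochInf (X ^ 2) (X ^ 8) * qPochInf (X ^ 6) (X ^ 8) := by
    rw [qPochInf_mul_qPochInf_neg (dvd_pow_self X two_ne_zero), ← pow_mul]
    simpa [Fin.prod_univ_two] using qPochInf_X_pow_eq_prod_fin R 2 four_ne_zero 2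
  rw [hodd] at htwo
  rw [heven]
  linear_combination
    qPochInf (-X) (X ^ 2) * qPochInf (X ^ 3) (X ^ 8) * qPochInf (X ^ 5) (X ^ 8) *
      qPochInf (X ^ 8) (X ^ 8) * mk_B_mul_qPochInf R -
    PowerSeries.mk (fun n ↦ (B n : R)) * qPochInf (X ^ 4) (X ^ 8) * qPochInf (X ^ 8) (X ^ 8) * htwo

end ProductSide

theorem mk_A_eq_mk_B :
    PowerSeries.mk (fun n ↦ (A n : ℤ)) = PowerSeries.mk fun n ↦ (B n : ℤ) := by
  have hX : (X : ℤ⟦X⟧) ∣ X ^ 2 := dvd_pow_self X two_ne_zero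
  refine mul_left_cancel₀ (qPochInf_ne_zero hX (X ^ 2)) ?_
  rw [qPochInf_mul_mk_A, gordonJ_zero, qPochInf_mul_mk_B]

end GollnitzGordon

/-- **Göllnitz–Gordon partition theorem**: `A n = B n` for all `n`. -/
theorem gollnitz_gordon (n : ℕ) : A n = B n := by
  have hcoeff := PowerSeries.ext_iff.mp GollnitzGordon.mk_A_eq_mk_B n
  simpa using hcoeff
end

section
/- (Andrews) For every nonnegative integer n, C(n) = B(n), where C(n) is the number of signed partitions of n in which the negative parts are distinct, odd, and smaller in magnitude than twice the number of positive parts, and the positive parts are even and each of magnitude at least twice the number of positive parts; and B(n) is the number of partitions of n into parts congruent to 1, 4, or 7 modulo 8. -/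
/-- A *signed partition* of `n` is a pair of multisets of positive integers
`(π, ν)` (the positive and negative parts) with `|π| - |ν| = n`.  It is an
*Andrews signed Göllnitz–Gordon partition* if the negative parts are distinct,
odd, and smaller in magnitude than twice the number of positive parts, while the
positive parts are even and each at least twice the number of positive parts. -/
def IsSignedGG (n : ℕ) (s : Multiset ℕ × Multiset ℕ) : Prop :=
  (∀ a ∈ s.1, 0 < a) ∧ (∀ a ∈ s.2, 0 < a) ∧
  (∀ a ∈ s.1, Even a ∧ 2 * Multiset.card s.1 ≤ a) ∧
  s.2.Nodup ∧ (∀ a ∈ s.2, Odd a ∧ a < 2 * Multiset.card s.1) ∧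
  (s.1.sum : ℤ) - (s.2.sum : ℤ) = (n : ℤ)

/-- `C n` is the number of Andrews signed Göllnitz–Gordon partitions of `n`. -/
noncomputable def C (n : ℕ) : ℕ :=
  Nat.card {s : Multiset ℕ × Multiset ℕ // IsSignedGG n s}

/-!
Classifying the signed partitions by their number `k` of positive parts gives the generating
function `∑ q ^ (k ^ 2) (-q; q²)_k / (q²; q²)_k` of `C`, one side of the Göllnitz–Gordon identity;
the other side is the product generating `B`.

The identity is obtained by iterating Bailey's lemma. Its input is the unit Bailey pair, an instance
of the finite Jacobi triple product. The first step, in base `x`, makes every `β` a reciprocal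
`1 / (x; x)_n`; the second, in base `x = q²` with `u = -q`, turns these into the left-hand side and
the `α`'s into the theta series in `q³, q⁵`, which the Jacobi triple product evaluates.

To let the order of truncation tend to infinity without topology, we work in a ring where
`q ^ D = 0`: there `(a; q)_n` does not depend on `n ≥ D`, so that infinite products are finite.
Taking `ℤ⟦X⟧ / (X ^ D)` for this ring compares the coefficients below `D`.
-/

open Finset
open scoped Ring

section QSeries

variable {R : Type*} [CommRing R]

/-- The `q`-Pochhammer symbol `(a; x)_n`. -/
def qPoch (a x : R) (n : ℕ) : R := ∏ i ∈ range n, (1 - a * x ^ i)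

/-- The Gaussian binomial coefficient `[n, k]_x`, defined by its Pascal recurrence. -/
def gaussBinom (x : R) : ℕ → ℕ → R
  | _, 0 => 1
  | 0, _ + 1 => 0
  | n + 1, k + 1 => x ^ (k + 1) * gaussBinom x n (k + 1) + gaussBinom x n k

@[simp]
lemma qPoch_zero (a x : R) : qPoch a x 0 = 1 := prod_range_zero _

lemma qPoch_succ (a x : R) (n : ℕ) : qPoch a x (n + 1) = qPoch a x n * (1 - a * x ^ n) :=
  prod_range_succ _ _

lemma qPoch_add (a x : R) (m n : ℕ) :
    qPoch a x (m + n) = qPoch a x m * qPoch (a * x ^ m) x n := by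
  simp only [qPoch, prod_range_add, pow_add, mul_assoc]

lemma qPoch_succ' (a x : R) (n : ℕ) : qPoch a x (n + 1) = (1 - a) * qPoch (a * x) x n := by
  rw [add_comm, qPoch_add, pow_one]
  simp [qPoch]

lemma map_qPoch {S : Type*} [CommRing S] (f : R →+* S) (a x : R) (n : ℕ) :
    f (qPoch a x n) = qPoch (f a) (f x) n := by simp [qPoch]

lemma qPoch_mul_qPoch_neg (a x : R) (n : ℕ) :
    qPoch a x n * qPoch (-a) x n = qPoch (a ^ 2) (x ^ 2) n := by
  simp only [qPoch, ← prod_mul_distrib]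
  exact prod_congr rfl fun i _ => by ring

lemma prod_range_mul_eq_prod_prod {M : Type*} [CommMonoid M] (f : ℕ → M) (m n : ℕ) :
    ∏ i ∈ range (m * n), f i = ∏ j ∈ range m, ∏ i ∈ range n, f (m * i + j) := by
  rw [prod_comm]
  induction n with
  | zero => simp
  | succ n ih => rw [Nat.mul_succ, prod_range_add, ih, prod_range_succ]

lemma qPoch_mul (a x : R) (m n : ℕ) :
    qPoch a x (m * n) = ∏ j ∈ range m, qPoch (a * x ^ j) (x ^ m) n := by
  simp only [qPoch, prod_range_mul_eq_prod_prod]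
  exact prod_congr rfl fun j _ => prod_congr rfl fun i _ => by ring

lemma isUnit_qPoch {a : R} (ha : IsNilpotent a) (x : R) (n : ℕ) : IsUnit (qPoch a x n) :=
  (IsUnit.prod_iff).2 fun i _ => ((Commute.all a (x ^ i)).isNilpotent_mul_right ha).isUnit_one_sub

lemma gaussBinom_zero (x : R) (n : ℕ) : gaussBinom x n 0 = 1 := by cases n <;> rfl

lemma gaussBinom_succ (x : R) (n k : ℕ) : gaussBinom x (n + 1) (k + 1) =
    x ^ (k + 1) * gaussBinom x n (k + 1) + gaussBinom x n k := rfl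

lemma gaussBinom_eq_zero_of_lt (x : R) : ∀ {n k : ℕ}, n < k → gaussBinom x n k = 0
  | 0, _ + 1, _ => rfl
  | n + 1, k + 1, h => by
    rw [gaussBinom_succ, gaussBinom_eq_zero_of_lt x (Nat.lt_of_succ_lt h),
      gaussBinom_eq_zero_of_lt x (Nat.lt_of_succ_lt_succ h), mul_zero, add_zero]

lemma gaussBinom_self (x : R) (n : ℕ) : gaussBinom x n n = 1 := by
  induction n with
  | zero => rfl
  | succ n ih => rw [gaussBinom_succ, ih, gaussBinom_eq_zero_of_lt x n.lt_succ_self]; simp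

lemma gaussBinom_mul_qPoch_mul_qPoch (x : R) : ∀ n k : ℕ,
    gaussBinom x (n + k) k * qPoch x x k * qPoch x x n = qPoch x x (n + k)
  | n, 0 => by simp [gaussBinom_zero]
  | 0, k + 1 => by simp [gaussBinom_self]
  | n + 1, k + 1 => by
    have left := gaussBinom_mul_qPoch_mul_qPoch x n (k + 1)
    have right := gaussBinom_mul_qPoch_mul_qPoch x (n + 1) k
    rw [← add_assoc (n + 1) k 1, gaussBinom_succ, qPoch_succ x x (n + 1 + k)]
    rw [show n + (k + 1) = n + 1 + k by omega] at left
    rw [qPoch_succ x x k] at left ⊢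
    rw [qPoch_succ x x n] at right ⊢
    linear_combination x ^ (k + 1) * (1 - x * x ^ n) * left + (1 - x * x ^ k) * right

lemma sum_gaussBinom_succ_mul (x : R) (M : ℕ) (f : ℕ → R) :
    ∑ k ∈ range (M + 2), gaussBinom x (M + 1) k * f k =
      ∑ k ∈ range (M + 1), gaussBinom x M k * (x ^ k * f k + f (k + 1)) := by
  have shifted := sum_range_succ' (fun k => x ^ k * gaussBinom x M k * f k) (M + 1)
  rw [sum_range_succ, gaussBinom_eq_zero_of_lt x M.lt_succ_self] at shifted
  rw [sum_range_succ']
  simp only [gaussBinom_zero, gaussBinom_succ, add_mul, mul_add, sum_add_distrib, pow_zero, one_mul,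
    mul_zero, zero_mul, add_zero] at shifted ⊢
  simp only [mul_left_comm (gaussBinom x M _), ← mul_assoc, shifted]
  ring

/-- The factor `(v / b; x)_k (-b)^k x^(k choose 2)` of `q`-hypergeometric summations, written
without division so that `b` may vanish. -/
def vandermondeWeight (b v x : R) (k : ℕ) : R := ∏ i ∈ range k, x ^ i * (b * x ^ i - v)

lemma vandermondeWeight_succ (b v x : R) (k : ℕ) : vandermondeWeight b v x (k + 1) =
    vandermondeWeight b v x k * (x ^ k * (b * x ^ k - v)) := prod_range_succ _ _

lemma vandermondeWeight_mul_mul (b v x : R) (k : ℕ) :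
    vandermondeWeight (b * x) (v * x) x k = x ^ k * vandermondeWeight b v x k := by
  simp only [vandermondeWeight]
  rw [← card_range k, ← prod_const, card_range, ← prod_mul_distrib]
  exact prod_congr rfl fun i _ => by ring

lemma vandermondeWeight_add (u x : R) (r k : ℕ) : vandermondeWeight x u x (r + k) =
    vandermondeWeight x u x r * vandermondeWeight (x ^ (2 * r + 1)) (u * x ^ r) x k := by
  simp only [vandermondeWeight, prod_range_add]
  congr 1
  exact prod_congr rfl fun i _ => by ring

theorem q_chu_vandermonde (x : R) (M : ℕ) : ∀ b v : R,
    ∑ k ∈ range (M + 1), gaussBinom x M k *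
      (vandermondeWeight b v x k * qPoch (b * x ^ k) x (M - k)) = qPoch v x M := by
  induction M with
  | zero => simp [gaussBinom_zero, vandermondeWeight]
  | succ M ih =>
    intro b v
    rw [sum_gaussBinom_succ_mul, qPoch_succ', ← ih (b * x) (v * x), mul_sum]
    refine sum_congr rfl fun k hk => ?_
    rw [vandermondeWeight_mul_mul, vandermondeWeight_succ,
      show M + 1 - k = M - k + 1 by grind, qPoch_succ', Nat.add_sub_add_right, mul_right_comm b,
      mul_assoc b, ← pow_succ']
    ring

theorem q_binomial_theorem (x v : R) (M : ℕ) :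
    ∑ k ∈ range (M + 1), gaussBinom x M k * ∏ i ∈ range k, -(v * x ^ i) = qPoch v x M := by
  rw [← q_chu_vandermonde x M 0 v]
  refine sum_congr rfl fun k _ => ?_
  simp [vandermondeWeight, qPoch, mul_comm]

/-- The coefficient of `[m + n, k]` in the expansion of `(a; ab)_m (b; ab)_n`. Truncated
subtraction makes one of the two products empty. -/
def twoSidedTerm (a b : R) (n k : ℕ) : R :=
  (∏ i ∈ range (k - n), -(a * (a * b) ^ i)) * ∏ i ∈ range (n - k), -(b * (a * b) ^ i)

lemma pow_mul_twoSidedTerm_succ (a b : R) (n k : ℕ) :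
    (a * b) ^ k * twoSidedTerm a b (n + 1) k = -(b * (a * b) ^ n) * twoSidedTerm a b n k := by
  unfold twoSidedTerm
  rcases le_or_gt k n with h | h
  · obtain ⟨d, rfl⟩ := Nat.exists_eq_add_of_le h
    simp only [Nat.sub_eq_zero_of_le h, Nat.sub_eq_zero_of_le (h.trans (Nat.le_succ _)),
      show k + d - k = d by omega, show k + d + 1 - k = d + 1 by omega, prod_range_succ]
    ring
  · obtain ⟨d, rfl⟩ := Nat.exists_eq_add_of_lt h
    simp only [show n + d + 1 - n = d + 1 by omega, show n + d + 1 - (n + 1) = d by omega,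
      show n - (n + d + 1) = 0 by omega, show n + 1 - (n + d + 1) = 0 by omega, prod_range_succ]
    ring

lemma twoSidedTerm_succ_succ (a b : R) (n k : ℕ) :
    twoSidedTerm a b (n + 1) (k + 1) = twoSidedTerm a b n k := by
  simp only [twoSidedTerm, Nat.add_sub_add_right]

theorem finite_jacobi_triple_product (a b : R) (m n : ℕ) :
    ∑ k ∈ range (m + n + 1), gaussBinom (a * b) (m + n) k * twoSidedTerm a b n k =
      qPoch a (a * b) m * qPoch b (a * b) n := by
  induction n with
  | zero => simpa [twoSidedTerm] using q_binomial_theorem (a * b) a m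
  | succ n ih =>
    rw [← add_assoc, sum_gaussBinom_succ_mul, qPoch_succ, ← mul_assoc, ← ih, sum_mul]
    refine sum_congr rfl fun k _ => ?_
    rw [pow_mul_twoSidedTerm_succ, twoSidedTerm_succ_succ]
    ring

/-- The sum of the coefficients at `r` and `-r` in the theta series of the Jacobi triple product
`(a; ab)_∞ (b; ab)_∞ (ab; ab)_∞`. -/
def thetaCoeff (a b : R) (r : ℕ) : R :=
  if r = 0 then 1 else ∏ i ∈ range r, -(a * (a * b) ^ i) + ∏ i ∈ range r, -(b * (a * b) ^ i)

lemma sum_range_two_mul_succ {M : Type*} [AddCommMonoid M] (f : ℕ → M) (N : ℕ) :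
    ∑ k ∈ range (2 * N + 1), f k =
      ∑ r ∈ range (N + 1), if r = 0 then f N else f (N + r) + f (N - r) := by
  rw [show 2 * N + 1 = N + (N + 1) by omega, sum_range_add, ← sum_range_reflect,
    sum_range_succ' _ N, sum_range_succ' _ N]
  simp only [Nat.add_eq_zero_iff, one_ne_zero, and_false, if_false, if_true, sum_add_distrib,
    add_zero]
  rw [← add_assoc, add_comm (∑ i ∈ range N, f (N - 1 - i))]
  simp only [Nat.sub_sub, add_comm 1]

end QSeries

section InverseQPoch

variable {R : Type*} [CommRing R] {x : R}

/-- The reciprocal `1 / (x; x)_n`; it is the zero junk value if `(x; x)_n` is not a unit. -/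
noncomputable def invQPoch (x : R) (n : ℕ) : R := (qPoch x x n)⁻¹ʳ

lemma qPoch_mul_invQPoch (hx : ∀ n, IsUnit (qPoch x x n)) (n : ℕ) :
    qPoch x x n * invQPoch x n = 1 :=
  Ring.mul_inverse_cancel _ (hx n)

lemma gaussBinom_eq_mul_invQPoch (hx : ∀ n, IsUnit (qPoch x x n)) {n k : ℕ} (h : k ≤ n) :
    gaussBinom x n k = qPoch x x n * (invQPoch x k * invQPoch x (n - k)) := by
  have key := gaussBinom_mul_qPoch_mul_qPoch x (n - k) k
  rw [Nat.sub_add_cancel h] at key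
  rw [← key]
  linear_combination (-gaussBinom x n k * (qPoch x x (n - k) * invQPoch x (n - k))) *
    qPoch_mul_invQPoch hx k - gaussBinom x n k * qPoch_mul_invQPoch hx (n - k)

lemma invQPoch_mul_invQPoch (hx : ∀ n, IsUnit (qPoch x x n)) {n k : ℕ} (h : k ≤ n) :
    invQPoch x k * invQPoch x (n - k) = gaussBinom x n k * invQPoch x n := by
  rw [gaussBinom_eq_mul_invQPoch hx h]
  linear_combination -(invQPoch x k * invQPoch x (n - k)) * qPoch_mul_invQPoch hx n

lemma invQPoch_eq_qPoch_mul (hx : ∀ n, IsUnit (qPoch x x n)) (m n : ℕ) :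
    invQPoch x m = qPoch (x ^ (m + 1)) x n * invQPoch x (m + n) := by
  have split := qPoch_add x x m n
  rw [← pow_succ'] at split
  have inv_m := qPoch_mul_invQPoch hx m
  have inv_mn := qPoch_mul_invQPoch hx (m + n)
  rw [split] at inv_mn
  linear_combination qPoch (x ^ (m + 1)) x n * invQPoch x (m + n) * inv_m -
    invQPoch x m * inv_mn

theorem jacobi_triple_product_bailey_pair (hx : ∀ n, IsUnit (qPoch x x n)) {a b : R}
    (hab : a * b = x) (N : ℕ) :
    ∑ r ∈ range (N + 1), thetaCoeff a b r * (invQPoch x (N - r) * invQPoch x (N + r)) =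
      qPoch a x N * qPoch b x N * invQPoch x (2 * N) := by
  subst hab
  rw [← finite_jacobi_triple_product, ← two_mul, sum_range_two_mul_succ, sum_mul]
  refine sum_congr rfl fun r hr => ?_
  have hrN : r ≤ N := mem_range_succ_iff.1 hr
  have upper := invQPoch_mul_invQPoch hx (show N + r ≤ 2 * N by omega)
  have lower := invQPoch_mul_invQPoch hx (show N - r ≤ 2 * N by omega)
  rw [show 2 * N - (N + r) = N - r by omega] at upper
  rw [show 2 * N - (N - r) = N + r by omega] at lower
  split_ifs with h0
  · subst h0
    simpa [thetaCoeff, twoSidedTerm] using upper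
  · simp only [thetaCoeff, twoSidedTerm, if_neg h0, show N + r - N = r by omega,
      show N - (N + r) = 0 by omega, show N - r - N = 0 by omega, show N - (N - r) = r by omega,
      prod_range_zero, one_mul, mul_one]
    linear_combination (∏ i ∈ range r, -(a * (a * b) ^ i)) * upper +
      (∏ i ∈ range r, -(b * (a * b) ^ i)) * lower

lemma sum_vandermondeWeight_mul_invQPoch (hx : ∀ n, IsUnit (qPoch x x n)) (u : R) (r M : ℕ) :
    ∑ k ∈ range (M + 1), vandermondeWeight x u x (r + k) * invQPoch x (M - k) *
        (invQPoch x k * invQPoch x (2 * r + k)) =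
      vandermondeWeight x u x r * qPoch (u * x ^ r) x M *
        (invQPoch x M * invQPoch x (2 * r + M)) := by
  rw [← q_chu_vandermonde x M (x ^ (2 * r + 1)), mul_sum, sum_mul]
  refine sum_congr rfl fun k hk => ?_
  have hkM : k ≤ M := mem_range_succ_iff.1 hk
  have tail := invQPoch_eq_qPoch_mul hx (2 * r + k) (M - k)
  rw [show 2 * r + k + (M - k) = 2 * r + M by omega,
    show 2 * r + k + 1 = 2 * r + 1 + k by omega, pow_add] at tail
  rw [vandermondeWeight_add, tail]
  linear_combination vandermondeWeight x u x r *
    vandermondeWeight (x ^ (2 * r + 1)) (u * x ^ r) x k *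
    (qPoch (x ^ (2 * r + 1) * x ^ k) x (M - k) * invQPoch x (2 * r + M)) *
    invQPoch_mul_invQPoch hx hkM

/-- Bailey's lemma relative to `1`, with parameters `ρ₁ = x / u` and `ρ₂ → ∞`. -/
theorem bailey_lemma (hx : ∀ n, IsUnit (qPoch x x n)) (u : R) (α : ℕ → R) (N : ℕ) :
    ∑ n ∈ range (N + 1), vandermondeWeight x u x n * invQPoch x (N - n) *
        ∑ r ∈ range (n + 1), α r * (invQPoch x (n - r) * invQPoch x (n + r)) =
      ∑ r ∈ range (N + 1), α r * (vandermondeWeight x u x r * qPoch (u * x ^ r) x (N - r)) *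
        (invQPoch x (N - r) * invQPoch x (N + r)) := by
  simp only [mul_sum]
  rw [sum_comm' (t' := range (N + 1)) (s' := fun r => Ico r (N + 1))
    (by intro n r; simp only [mem_range, mem_Ico]; omega)]
  refine sum_congr rfl fun r hr => ?_
  obtain ⟨M, rfl⟩ := Nat.exists_eq_add_of_le (mem_range_succ_iff.1 hr)
  have inner := sum_vandermondeWeight_mul_invQPoch hx u r M
  rw [Nat.add_sub_cancel_left, show r + M + r = 2 * r + M by omega, mul_assoc, ← inner, mul_sum,
    sum_Ico_eq_sum_range, show r + M + 1 - r = M + 1 by omega]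
  refine sum_congr rfl fun k _ => ?_
  rw [Nat.add_sub_add_left, Nat.add_sub_cancel_left, show r + k + r = 2 * r + k by omega]
  ring

/-- All but the zeroth `β` of the unit Bailey pair vanish because `(1; x)_n = 0` for `n > 0`. -/
lemma unit_bailey_pair (hx : ∀ n, IsUnit (qPoch x x n)) (n : ℕ) :
    ∑ r ∈ range (n + 1), thetaCoeff 1 x r * (invQPoch x (n - r) * invQPoch x (n + r)) =
      if n = 0 then 1 else 0 := by
  rw [jacobi_triple_product_bailey_pair hx (one_mul x)]
  rcases n with _ | n
  · simp [invQPoch, Ring.inverse_one]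
  · simp [qPoch_succ']

lemma unit_bailey_pair_iterate (hx : ∀ n, IsUnit (qPoch x x n)) (N : ℕ) :
    ∑ r ∈ range (N + 1), thetaCoeff 1 x r * vandermondeWeight x 0 x r *
        (invQPoch x (N - r) * invQPoch x (N + r)) = invQPoch x N := by
  have bailey := bailey_lemma hx 0 (thetaCoeff 1 x) N
  simp only [unit_bailey_pair hx, sum_range_succ' _ N] at bailey
  rw [sum_range_succ' _ N]
  simpa [vandermondeWeight, qPoch] using bailey.symm

end InverseQPoch

section GollnitzGordon

variable {R : Type*} [CommRing R]

lemma sum_range_odd (n : ℕ) : ∑ i ∈ range n, (2 * i + 1) = n ^ 2 := by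
  induction n with
  | zero => rfl
  | succ n ih => rw [sum_range_succ, ih]; ring

lemma prod_range_pow_odd (q : R) (n : ℕ) : ∏ i ∈ range n, q ^ (2 * i + 1) = q ^ n ^ 2 := by
  rw [prod_pow_eq_pow_sum, sum_range_odd]

lemma vandermondeWeight_sq_neg (q : R) (n : ℕ) :
    vandermondeWeight (q ^ 2) (-q) (q ^ 2) n = q ^ n ^ 2 * qPoch (-q) (q ^ 2) n := by
  rw [← prod_range_pow_odd, vandermondeWeight, qPoch, ← prod_mul_distrib]
  exact prod_congr rfl fun i _ => by ring

lemma thetaCoeff_one_mul_vandermondeWeight_mul_pow (q : R) (r : ℕ) :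
    thetaCoeff 1 (q ^ 2) r * vandermondeWeight (q ^ 2) 0 (q ^ 2) r * q ^ r ^ 2 =
      thetaCoeff (q ^ 3) (q ^ 5) r := by
  rw [← prod_range_pow_odd]
  rcases eq_or_ne r 0 with rfl | hr
  · simp [thetaCoeff, vandermondeWeight]
  · simp only [thetaCoeff, if_neg hr, vandermondeWeight, add_mul, ← prod_mul_distrib]
    congr 1 <;> exact prod_congr rfl fun i _ => by ring

theorem finite_gollnitz_gordon {q : R} (hq : ∀ n, IsUnit (qPoch (q ^ 2) (q ^ 2) n))
    (N : ℕ) :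
    ∑ n ∈ range (N + 1), q ^ n ^ 2 * qPoch (-q) (q ^ 2) n * invQPoch (q ^ 2) n *
        invQPoch (q ^ 2) (N - n) =
      qPoch (-q) (q ^ 2) N * ∑ r ∈ range (N + 1), thetaCoeff (q ^ 3) (q ^ 5) r *
        (invQPoch (q ^ 2) (N - r) * invQPoch (q ^ 2) (N + r)) := by
  have bailey := bailey_lemma hq (-q)
    (fun r => thetaCoeff 1 (q ^ 2) r * vandermondeWeight (q ^ 2) 0 (q ^ 2) r) N
  simp only [unit_bailey_pair_iterate hq, vandermondeWeight_sq_neg] at bailey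
  simp only [mul_right_comm _ (invQPoch (q ^ 2) _) (invQPoch (q ^ 2) (N - _)), bailey, mul_sum]
  refine sum_congr rfl fun r hr => ?_
  have split := qPoch_add (-q) (q ^ 2) r (N - r)
  rw [Nat.add_sub_cancel' (mem_range_succ_iff.1 hr)] at split
  rw [split, ← thetaCoeff_one_mul_vandermondeWeight_mul_pow]
  ring

section Nilpotent

variable {a b x q : R} {D : ℕ}

lemma qPoch_eq_of_le (a : R) (hx : x ^ D = 0) {n : ℕ} (hn : D ≤ n) :
    qPoch a x n = qPoch a x D := by
  obtain ⟨k, rfl⟩ := Nat.exists_eq_add_of_le hn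
  rw [qPoch_add, hx, mul_zero]
  simp [qPoch]

lemma invQPoch_eq_of_le (hx : x ^ D = 0) {n : ℕ} (hn : D ≤ n) : invQPoch x n = invQPoch x D := by
  rw [invQPoch, qPoch_eq_of_le x hx hn, invQPoch]

lemma qPoch_eq_prod_qPoch_pow (a : R) (hx : x ^ D = 0) {m : ℕ} (hm : 0 < m) :
    qPoch a x D = ∏ j ∈ range m, qPoch (a * x ^ j) (x ^ m) D := by
  rw [← qPoch_mul, qPoch_eq_of_le a hx (Nat.le_mul_of_pos_left D hm)]

lemma thetaCoeff_eq_zero (ha : a ^ D = 0) (hb : b ^ D = 0) {r : ℕ} (hr : D ≤ r) :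
    thetaCoeff a b r = 0 := by
  have prod_eq_zero {c : R} (hc : c ^ D = 0) : ∏ i ∈ range r, -(c * (a * b) ^ i) = 0 := by
    simp only [← neg_mul, prod_mul_distrib, prod_const, card_range]
    rw [neg_pow, pow_eq_zero_of_le hr hc, mul_zero, zero_mul]
  rw [thetaCoeff, prod_eq_zero ha, prod_eq_zero hb, add_zero]
  split_ifs with h
  · simpa [show D = 0 by omega] using ha
  · rfl

lemma sum_range_two_mul_succ_mul_eq {f g : ℕ → R} {c : R} (hf : ∀ r, D ≤ r → f r = 0)
    (hg : ∀ r < D, g r = c) :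
    ∑ r ∈ range (2 * D + 1), f r * g r = (∑ r ∈ range D, f r) * c := by
  rw [show 2 * D + 1 = D + (D + 1) by omega, sum_range_add, sum_mul,
    sum_eq_zero (s := range (D + 1)) fun r _ => by rw [hf _ (Nat.le_add_right D r), zero_mul],
    add_zero]
  exact sum_congr rfl fun r hr => by rw [hg r (mem_range.1 hr)]

lemma sum_thetaCoeff_mul_invQPoch_two_mul (ha : a ^ D = 0) (hb : b ^ D = 0) (hx : x ^ D = 0) :
    ∑ r ∈ range (2 * D + 1), thetaCoeff a b r * (invQPoch x (2 * D - r) * invQPoch x (2 * D + r)) =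
      (∑ r ∈ range D, thetaCoeff a b r) * (invQPoch x D * invQPoch x D) :=
  sum_range_two_mul_succ_mul_eq (fun _ => thetaCoeff_eq_zero ha hb) fun r hr => by
    rw [invQPoch_eq_of_le hx (n := 2 * D - r) (by omega),
      invQPoch_eq_of_le hx (n := 2 * D + r) (by omega)]

theorem jacobi_triple_product_of_nilpotent (ha : a ^ D = 0) (hb : b ^ D = 0) :
    ∑ r ∈ range D, thetaCoeff a b r =
      qPoch a (a * b) D * qPoch b (a * b) D * qPoch (a * b) (a * b) D := by
  have hab : (a * b) ^ D = 0 := by rw [mul_pow, ha, zero_mul]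
  have hunit (n : ℕ) : IsUnit (qPoch (a * b) (a * b) n) := isUnit_qPoch ⟨D, hab⟩ _ n
  have jtp := jacobi_triple_product_bailey_pair hunit rfl (2 * D)
  rw [sum_thetaCoeff_mul_invQPoch_two_mul ha hb hab, qPoch_eq_of_le a hab (by omega),
    qPoch_eq_of_le b hab (by omega), invQPoch_eq_of_le hab (n := 2 * (2 * D)) (by omega)] at jtp
  have inv := qPoch_mul_invQPoch hunit D
  set Q := qPoch (a * b) (a * b) D
  set ι := invQPoch (a * b) D
  linear_combination Q ^ 2 * jtp + (qPoch a (a * b) D * qPoch b (a * b) D * Q -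
    (∑ r ∈ range D, thetaCoeff a b r) * (Q * ι + 1)) * inv

lemma qPoch_sq_eq_mod_eight (hq : q ^ D = 0) :
    qPoch (q ^ 2) (q ^ 2) D =
      (qPoch q (q ^ 8) D * qPoch (q ^ 4) (q ^ 8) D * qPoch (q ^ 7) (q ^ 8) D) *
        (qPoch (-q) (q ^ 2) D *
          (qPoch (q ^ 3) (q ^ 8) D * qPoch (q ^ 5) (q ^ 8) D * qPoch (q ^ 8) (q ^ 8) D)) := by
  have hpow {e : ℕ} (he : e ≠ 0) : (q ^ e) ^ D = 0 := by rw [pow_right_comm, hq, zero_pow he]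
  have split_two := qPoch_eq_prod_qPoch_pow (q ^ 2) (hpow two_ne_zero) (m := 2) two_pos
  have split_four := qPoch_eq_prod_qPoch_pow (q ^ 4) (hpow four_ne_zero) (m := 2) two_pos
  have split_odd := qPoch_eq_prod_qPoch_pow q (hpow two_ne_zero) (m := 4) four_pos
  have signs := qPoch_mul_qPoch_neg q (q ^ 2) D
  simp only [prod_range_succ, prod_range_zero, one_mul, pow_zero, mul_one]
    at split_two split_four split_odd
  simp only [← pow_mul, ← pow_add, ← pow_succ', Nat.reduceAdd, Nat.reduceMul]
    at split_two split_four split_odd signs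
  rw [split_two, ← signs, split_four, split_odd]
  ring

theorem gollnitz_gordon_of_nilpotent (hq : q ^ D = 0) :
    (∑ n ∈ range D, q ^ n ^ 2 * qPoch (-q) (q ^ 2) n * invQPoch (q ^ 2) n) *
      (qPoch q (q ^ 8) D * qPoch (q ^ 4) (q ^ 8) D * qPoch (q ^ 7) (q ^ 8) D) = 1 := by
  have hpow {e : ℕ} (he : e ≠ 0) : (q ^ e) ^ D = 0 := by rw [pow_right_comm, hq, zero_pow he]
  have hunit (n : ℕ) : IsUnit (qPoch (q ^ 2) (q ^ 2) n) := isUnit_qPoch ⟨D, hpow two_ne_zero⟩ _ n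
  have bailey := finite_gollnitz_gordon hunit (2 * D)
  rw [sum_thetaCoeff_mul_invQPoch_two_mul (hpow three_ne_zero) (hpow (by decide))
      (hpow two_ne_zero),
    sum_range_two_mul_succ_mul_eq (c := invQPoch (q ^ 2) D)
      (fun r hr => by
        rw [pow_eq_zero_of_le (hr.trans (Nat.le_self_pow two_ne_zero r)) hq, zero_mul, zero_mul])
      (fun r hr => invQPoch_eq_of_le (hpow two_ne_zero) (by omega)),
    qPoch_eq_of_le (-q) (hpow two_ne_zero) (by omega),
    jacobi_triple_product_of_nilpotent (hpow three_ne_zero) (hpow (by decide)), ← pow_add] at bailey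
  have inv := qPoch_mul_invQPoch hunit D
  have prod := qPoch_sq_eq_mod_eight hq
  have cancelled : (∑ n ∈ range D, q ^ n ^ 2 * qPoch (-q) (q ^ 2) n * invQPoch (q ^ 2) n) =
      qPoch (-q) (q ^ 2) D * (qPoch (q ^ 3) (q ^ 8) D * qPoch (q ^ 5) (q ^ 8) D *
        qPoch (q ^ 8) (q ^ 8) D) * invQPoch (q ^ 2) D := by
    refine (IsUnit.of_mul_eq_one_right _ inv).mul_right_cancel ?_
    linear_combination bailey
  rw [cancelled, ← inv, prod]
  ring

end Nilpotent

end GollnitzGordon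

section GeneratingFunctions

open PowerSeries (X coeff mk)
open scoped PowerSeries

variable {α β : Type*}

/-- The generating function `∑ a, X ^ w a` of a weight `w`; a weight attained infinitely often
gets the junk coefficient `0`. -/
noncomputable def genFun (w : α → ℕ) : ℤ⟦X⟧ := mk fun n => (Nat.card {a // w a = n} : ℤ)

lemma coeff_genFun (w : α → ℕ) (n : ℕ) : coeff n (genFun w) = Nat.card {a // w a = n} :=
  PowerSeries.coeff_mk _ _

lemma genFun_comp_equiv (e : α ≃ β) (w : β → ℕ) : genFun (w ∘ e) = genFun w := by
  ext n
  rw [coeff_genFun, coeff_genFun]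
  exact congrArg _ (Nat.card_congr (e.subtypeEquiv fun _ => Iff.rfl))

lemma genFun_const_add (c : ℕ) (w : α → ℕ) : genFun (fun a => c + w a) = X ^ c * genFun w := by
  ext n
  rw [PowerSeries.coeff_X_pow_mul', coeff_genFun, coeff_genFun]
  split_ifs with hc
  · simp only [← Nat.sub_eq_iff_eq_add' hc, eq_comm]
  · have : IsEmpty {a // c + w a = n} := ⟨fun a => hc (a.2 ▸ Nat.le_add_right c _)⟩
    simp

lemma finite_const_add_eq {w : α → ℕ} (hw : ∀ n, Finite {a // w a = n}) (c n : ℕ) :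
    Finite {a // c + w a = n} :=
  Set.Finite.subset (s := {a | w a = n - c}) (hw (n - c)) fun _ ha => Nat.eq_sub_of_add_eq' ha

lemma genFun_of_unique [Unique α] (w : α → ℕ) : genFun w = X ^ w default := by
  ext n
  rw [coeff_genFun, PowerSeries.coeff_X_pow]
  split_ifs with hn
  · have : Unique {a // w a = n} := ⟨⟨default, hn.symm⟩, fun a => Subtype.ext (Unique.eq_default _)⟩
    simp
  · have : IsEmpty {a // w a = n} := ⟨fun a => hn (by rw [← a.2, Unique.eq_default a.1])⟩
    simp

lemma genFun_sumElim {v : α → ℕ} {w : β → ℕ} (hv : ∀ n, Finite {a // v a = n})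
    (hw : ∀ n, Finite {b // w b = n}) : genFun (Sum.elim v w) = genFun v + genFun w := by
  ext n
  rw [map_add, coeff_genFun, coeff_genFun, coeff_genFun, Nat.card_congr Equiv.subtypeSum]
  have : Finite {a // Sum.elim v w (Sum.inl a) = n} := hv n
  have : Finite {b // Sum.elim v w (Sum.inr b) = n} := hw n
  rw [Nat.card_sum, Nat.cast_add]
  rfl

lemma finite_add_eq [Finite α] (v : α → ℕ) {w : β → ℕ} (hw : ∀ n, Finite {b // w b = n}) (n : ℕ) :
    Finite {p : α × β // v p.1 + w p.2 = n} :=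
  have (a : α) : Finite {b // v a + w b = n} := finite_const_add_eq hw (v a) n
  Finite.of_equiv _ (Equiv.subtypeProdEquivSigmaSubtype fun a b => v a + w b = n).symm

lemma genFun_add [Fintype α] (v : α → ℕ) {w : β → ℕ} (hw : ∀ n, Finite {b // w b = n}) :
    genFun (fun p : α × β => v p.1 + w p.2) = (∑ a, X ^ v a) * genFun w := by
  ext n
  have hfin (a : α) : Finite {b // v a + w b = n} := finite_const_add_eq hw (v a) n
  rw [sum_mul, map_sum, coeff_genFun,
    Nat.card_congr (Equiv.subtypeProdEquivSigmaSubtype fun a b => v a + w b = n), Nat.card_sigma,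
    Nat.cast_sum]
  exact sum_congr rfl fun a _ => by rw [← genFun_const_add, coeff_genFun]

lemma X_pow_dvd_genFun_sigma_sub {γ : ℕ → Type*} (w : ∀ k, γ k → ℕ) (hw : ∀ k c, k ≤ w k c)
    (hfin : ∀ k n, Finite {c // w k c = n}) (D : ℕ) :
    X ^ D ∣ genFun (fun t : Σ k, γ k => w t.1 t.2) - ∑ k ∈ range D, genFun (w k) := by
  refine PowerSeries.X_pow_dvd_iff.2 fun n hn => ?_
  let e : (Σ k : Fin D, {c // w k c = n}) → {t : Σ k, γ k // w t.1 t.2 = n} :=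
    fun t => ⟨⟨t.1, t.2.1⟩, t.2.2⟩
  have he : e.Bijective := by
    refine ⟨?_, ?_⟩
    · rintro ⟨k, c, hc⟩ ⟨l, d, hd⟩ h
      simp only [e, Subtype.mk.injEq, Sigma.mk.injEq] at h
      obtain ⟨hkl, hcd⟩ := h
      obtain rfl := Fin.ext hkl
      obtain rfl := eq_of_heq hcd
      rfl
    · rintro ⟨⟨k, c⟩, hc⟩
      exact ⟨⟨⟨k, ((hw k c).trans hc.le).trans_lt hn⟩, c, hc⟩, rfl⟩
  rw [map_sub, map_sum, coeff_genFun, ← Nat.card_congr (Equiv.ofBijective e he), Nat.card_sigma,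
    sub_eq_zero, Nat.cast_sum, ← Fin.sum_univ_eq_sum_range]
  simp only [coeff_genFun]

lemma finite_sym_sum_eq (m k n : ℕ) (hm : 0 < m) :
    Finite {s : Sym ℕ k // m * (s : Multiset ℕ).sum = n} := by
  refine Set.Finite.subset (((range (n + 1)).sym k).finite_toSet) fun s hs => ?_
  refine mem_sym_iff.2 fun a ha => mem_range_succ_iff.2 ?_
  exact (Multiset.single_le_sum (fun _ _ => Nat.zero_le _) a ha).trans
    ((Nat.le_mul_of_pos_left _ hm).trans hs.le)

/-- Split the multisets of size `k + 1` into those containing `0`, with one `0` removed, and the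
others, with all elements lowered by one. -/
def symNatSuccEquiv (k : ℕ) : Sym ℕ k ⊕ Sym ℕ (k + 1) ≃ Sym ℕ (k + 1) :=
  ((Equiv.sumCongr (Sym.equivCongr shift.symm) (Equiv.refl _)).trans
    symOptionSuccEquiv.symm).trans (Sym.equivCongr shift)
where
  shift : Option ℕ ≃ ℕ := (Equiv.optionEquivSumPUnit.{0} ℕ).trans Equiv.natSumPUnitEquivNat

lemma symNatSuccEquiv_inl (k : ℕ) (s : Sym ℕ k) : symNatSuccEquiv k (Sum.inl s) = 0 ::ₛ s := by
  have hshift : symNatSuccEquiv.shift none = 0 := rfl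
  change Sym.map _ (none ::ₛ Sym.map _ s) = _
  simp [Sym.map_map, hshift]

lemma symNatSuccEquiv_inr (k : ℕ) (s : Sym ℕ (k + 1)) :
    symNatSuccEquiv k (Sum.inr s) = s.map Nat.succ := by
  change Sym.map _ (Sym.map _ s) = _
  simp only [Sym.map_map]
  rfl

lemma genFun_sym_succ {m : ℕ} (hm : 0 < m) (k : ℕ) :
    genFun (fun s : Sym ℕ (k + 1) => m * (s : Multiset ℕ).sum) =
      genFun (fun s : Sym ℕ k => m * (s : Multiset ℕ).sum) +
        (X ^ m) ^ (k + 1) * genFun (fun s : Sym ℕ (k + 1) => m * (s : Multiset ℕ).sum) := by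
  have raised (s : Sym ℕ (k + 1)) : m * ((s : Multiset ℕ).map Nat.succ).sum =
      m * (k + 1) + m * (s : Multiset ℕ).sum := by
    simp [Nat.succ_eq_add_one, Multiset.sum_map_add, mul_add, add_comm]
  conv_lhs => rw [← genFun_comp_equiv (symNatSuccEquiv k)]
  rw [← pow_mul, ← genFun_const_add]
  have hfin (l n : ℕ) := finite_sym_sum_eq m l n hm
  rw [← genFun_sumElim (hfin k) (finite_const_add_eq (hfin (k + 1)) _)]
  congr 1
  funext s
  rcases s with s | s
  · simp [symNatSuccEquiv_inl, Sym.coe_cons]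
  · exact (congrArg (fun t : Sym ℕ (k + 1) => m * (t : Multiset ℕ).sum)
      (symNatSuccEquiv_inr k s)).trans (raised s)

theorem genFun_sym_mul_qPoch {m : ℕ} (hm : 0 < m) (k : ℕ) :
    genFun (fun s : Sym ℕ k => m * (s : Multiset ℕ).sum) * qPoch (X ^ m) (X ^ m) k = 1 := by
  induction k with
  | zero => simp [genFun_of_unique, Sym.eq_nil_of_card_zero default]
  | succ k ih =>
    rw [qPoch_succ, ← pow_succ']
    linear_combination qPoch (X ^ m) (X ^ m) k * genFun_sym_succ hm k + ih

/-- A description of the signed partitions counted by `C` with `k` positive parts: the positive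
parts are `2a + 2k` for `a` in the multiset, the negative parts are `2i + 1` for the `i < k` outside
the finset. -/
abbrev SignedCode (k : ℕ) : Type := Finset (Fin k) × Sym ℕ k

/-- The signed partition described by a `SignedCode`. -/
def signedParts (t : Σ k, SignedCode k) : Multiset ℕ × Multiset ℕ :=
  ((t.2.2 : Multiset ℕ).map fun a => 2 * a + 2 * t.1,
    t.2.1ᶜ.val.map fun i : Fin t.1 => 2 * (i : ℕ) + 1)

/-- The integer partitioned by the signed partition of a `SignedCode`, computed from
`2k² - ∑ i < k, (2i + 1) = k²`. -/
def signedWeight (k : ℕ) (c : SignedCode k) : ℕ :=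
  k ^ 2 + (∑ i ∈ c.1, (2 * (i : ℕ) + 1) + 2 * (c.2 : Multiset ℕ).sum)

lemma odd_injective (k : ℕ) : Function.Injective fun i : Fin k => 2 * (i : ℕ) + 1 :=
  fun i j (hij : 2 * (i : ℕ) + 1 = 2 * (j : ℕ) + 1) => by omega

lemma signedParts_injective : Function.Injective signedParts := by
  rintro ⟨k, S, s⟩ ⟨l, T, t⟩ h
  obtain ⟨hpos, hneg⟩ := Prod.mk.inj h
  obtain rfl : k = l := by simpa using congrArg Multiset.card hpos
  obtain rfl : s = t :=
    Sym.coe_injective (Multiset.map_injective (fun a b (hab : 2 * a + 2 * k = _) => by omega) hpos)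
  obtain rfl : S = T :=
    compl_injective (val_injective (Multiset.map_injective (odd_injective k) hneg))
  rfl

lemma nodup_signedParts_snd (t : Σ k, SignedCode k) : (signedParts t).2.Nodup :=
  t.2.1ᶜ.nodup.map (odd_injective t.1)

lemma sum_signedParts (k : ℕ) (c : SignedCode k) :
    (signedParts ⟨k, c⟩).1.sum = signedWeight k c + (signedParts ⟨k, c⟩).2.sum := by
  have odds : ∑ i ∈ c.1, (2 * (i : ℕ) + 1) + ∑ i ∈ c.1ᶜ, (2 * (i : ℕ) + 1) = k ^ 2 := by
    rw [sum_add_sum_compl, Fin.sum_univ_eq_sum_range fun i => 2 * i + 1, sum_range_odd]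
  have positive : (signedParts ⟨k, c⟩).1.sum = 2 * (c.2 : Multiset ℕ).sum + 2 * k ^ 2 := by
    have double : ((c.2 : Multiset ℕ).map (2 * ·)).sum = 2 * (c.2 : Multiset ℕ).sum :=
      Multiset.sum_map_mul_left.trans (by rw [Multiset.map_id'])
    simp only [signedParts, Multiset.sum_map_add, double, Multiset.map_const',
      Multiset.sum_replicate, Sym.card_coe, smul_eq_mul]
    ring
  have negative : (signedParts ⟨k, c⟩).2.sum = ∑ i ∈ c.1ᶜ, (2 * (i : ℕ) + 1) := rfl
  rw [positive, negative, signedWeight]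
  omega

lemma isSignedGG_signedParts_iff {n k : ℕ} {c : SignedCode k} :
    IsSignedGG n (signedParts ⟨k, c⟩) ↔ signedWeight k c = n := by
  have card_eq : Multiset.card (signedParts ⟨k, c⟩).1 = k := by simp [signedParts]
  have hcard {a : ℕ} (ha : a ∈ (c.2 : Multiset ℕ)) : 0 < k :=
    Sym.card_coe (s := c.2) ▸ Multiset.card_pos_iff_exists_mem.2 ⟨a, ha⟩
  rw [IsSignedGG, card_eq, sum_signedParts]
  push_cast
  rw [add_sub_cancel_right, Nat.cast_inj]
  refine ⟨fun h => h.2.2.2.2.2, fun h => ⟨?_, ?_, ?_, ?_, ?_, h⟩⟩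
  · simp only [signedParts, Multiset.forall_mem_map_iff]
    intro a ha
    have := hcard ha
    omega
  · simp [signedParts]
  · simp only [signedParts, Multiset.forall_mem_map_iff]
    exact fun a _ => ⟨⟨a + k, by ring⟩, by omega⟩
  · exact nodup_signedParts_snd _
  · simp only [signedParts, Multiset.forall_mem_map_iff]
    exact fun i _ => ⟨⟨i, rfl⟩, by omega⟩

lemma IsSignedGG.exists_signedParts_eq {n : ℕ} {s : Multiset ℕ × Multiset ℕ}
    (h : IsSignedGG n s) : ∃ t, signedParts t = s := by
  obtain ⟨π, ν⟩ := s
  obtain ⟨-, -, hπ, hnodup, hν, -⟩ := h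
  let k := Multiset.card π
  let halves : Sym ℕ k := ⟨π.map fun a => a / 2 - k, Multiset.card_map _ _⟩
  refine ⟨⟨k, univ.filter fun i : Fin k => 2 * (i : ℕ) + 1 ∉ ν, halves⟩, Prod.ext ?_ ?_⟩
  · change (π.map _).map _ = π
    rw [Multiset.map_map]
    refine (Multiset.map_congr rfl fun a ha => ?_).trans (Multiset.map_id' π)
    obtain ⟨⟨b, rfl⟩, hb⟩ := hπ a ha
    change 2 * ((b + b) / 2 - k) + 2 * k = b + b
    change 2 * k ≤ b + b at hb
    omega
  · refine (Multiset.Nodup.ext (nodup_signedParts_snd _) hnodup).2 fun a => ?_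
    simp only [signedParts, compl_filter, not_not, Multiset.mem_map, mem_val, mem_filter,
      mem_univ, true_and]
    refine ⟨fun ⟨_, hi, hia⟩ => hia ▸ hi, fun ha => ?_⟩
    obtain ⟨⟨i, rfl⟩, hi⟩ := hν a ha
    exact ⟨⟨i, by change 2 * i + 1 < 2 * k at hi; omega⟩, ha, rfl⟩

lemma genFun_signedWeight_eq_mk_C :
    genFun (fun t : Σ k, SignedCode k => signedWeight t.1 t.2) = mk fun n => (C n : ℤ) := by
  ext n
  rw [coeff_genFun, PowerSeries.coeff_mk, C]
  congr 1
  refine Nat.card_congr (Equiv.ofBijective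
    (fun t => ⟨signedParts t.1, isSignedGG_signedParts_iff.2 t.2⟩) ⟨?_, ?_⟩)
  · exact fun t u h => Subtype.ext (signedParts_injective (Subtype.mk.inj h))
  · rintro ⟨s, hs⟩
    obtain ⟨t, rfl⟩ := hs.exists_signedParts_eq
    exact ⟨⟨t, isSignedGG_signedParts_iff.1 hs⟩, rfl⟩

lemma sum_finset_pow_odd (k : ℕ) :
    ∑ S : Finset (Fin k), (X : ℤ⟦X⟧) ^ ∑ i ∈ S, (2 * (i : ℕ) + 1) = qPoch (-X) (X ^ 2) k := by
  simp only [← prod_pow_eq_pow_sum]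
  rw [← powerset_univ, ← prod_one_add, Fin.prod_univ_eq_prod_range fun i => 1 + X ^ (2 * i + 1)]
  exact prod_congr rfl fun i _ => by ring

lemma genFun_signedWeight_mul_qPoch (k : ℕ) :
    genFun (signedWeight k) * qPoch (X ^ 2) (X ^ 2) k = X ^ k ^ 2 * qPoch (-X) (X ^ 2) k := by
  have split : genFun (signedWeight k) = X ^ k ^ 2 * (qPoch (-X) (X ^ 2) k *
      genFun fun s : Sym ℕ k => 2 * (s : Multiset ℕ).sum) := by
    rw [← sum_finset_pow_odd, ← genFun_add _ fun n => finite_sym_sum_eq 2 k n two_pos,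
      ← genFun_const_add]
    rfl
  rw [split, mul_assoc, mul_assoc, genFun_sym_mul_qPoch two_pos, mul_one]

variable {R : Type*} [CommRing R]

theorem map_mk_C (f : ℤ⟦X⟧ →+* R) {D : ℕ} (hf : f X ^ D = 0) :
    f (mk fun n => (C n : ℤ)) = ∑ k ∈ range D,
      f X ^ k ^ 2 * qPoch (-f X) (f X ^ 2) k * invQPoch (f X ^ 2) k := by
  have hsq : (f X ^ 2) ^ D = 0 := by rw [pow_right_comm, hf, zero_pow two_ne_zero]
  have square_le (k : ℕ) (c : SignedCode k) : k ≤ signedWeight k c :=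
    (Nat.le_self_pow two_ne_zero k).trans (Nat.le_add_right _ _)
  have hfin (k n : ℕ) : Finite {c // signedWeight k c = n} :=
    finite_const_add_eq (finite_add_eq (fun S : Finset (Fin k) => ∑ i ∈ S, (2 * (i : ℕ) + 1))
      fun n => finite_sym_sum_eq 2 k n two_pos) _ n
  obtain ⟨g, hg⟩ := X_pow_dvd_genFun_sigma_sub signedWeight square_le hfin D
  rw [← genFun_signedWeight_eq_mk_C, sub_eq_iff_eq_add.1 hg, map_add, map_mul, map_pow, hf,
    zero_mul, zero_add, map_sum]
  refine sum_congr rfl fun k _ => ?_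
  have hunit : IsUnit (qPoch (f X ^ 2) (f X ^ 2) k) := isUnit_qPoch ⟨D, hsq⟩ _ k
  have key := congrArg f (genFun_signedWeight_mul_qPoch k)
  simp only [map_mul, map_pow, map_qPoch, map_neg] at key
  rw [← key, mul_assoc, invQPoch, Ring.mul_inverse_cancel _ hunit, mul_one]

open PowerSeries.WithPiTopology in
theorem eventually_X_pow_dvd_mk_card_restricted_mul_prod_sub_one (p : ℕ → Prop) [DecidablePred p]
    (D : ℕ) :
    ∀ᶠ M in Filter.atTop, (X : ℤ⟦X⟧) ^ D ∣
      mk (fun n => (#(Nat.Partition.restricted n p) : ℤ)) *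
        (∏ i ∈ range M, if p (i + 1) then 1 - X ^ (i + 1) else 1) - 1 := by
  have partial_products :=
    (Nat.Partition.hasProd_powerSeriesMk_card_restricted ℤ p).tendsto_prod_nat
  rw [PowerSeries.WithPiTopology.tendsto_iff_coeff_tendsto] at partial_products
  simp only [nhds_discrete, Filter.tendsto_pure] at partial_products
  filter_upwards [(Filter.eventually_all_finset (range D)).2 fun d _ => partial_products d]
    with M coeff_eq
  set P : ℤ⟦X⟧ := ∏ i ∈ range M, if p (i + 1) then ∑' j : ℕ, X ^ ((i + 1) * j) else 1
  set Q : ℤ⟦X⟧ := ∏ i ∈ range M, if p (i + 1) then 1 - X ^ (i + 1) else 1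
  have inverse : P * Q = 1 := by
    rw [← prod_mul_distrib]
    refine prod_eq_one fun i _ => ?_
    split_ifs
    · simp only [pow_mul]
      exact tsum_pow_mul_one_sub_of_constantCoeff_eq_zero (by simp)
    · exact one_mul 1
  rw [← inverse, ← sub_mul]
  refine Dvd.dvd.mul_right (PowerSeries.X_pow_dvd_iff.2 fun d hd => ?_) Q
  rw [map_sub, coeff_eq d (mem_range.2 hd), sub_self]

/-- The residue condition on the parts of the partitions counted by `B`. -/
abbrev IsModEightPart (a : ℕ) : Prop := a % 8 = 1 ∨ a % 8 = 4 ∨ a % 8 = 7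

lemma B_eq_card_restricted (n : ℕ) : B n = #(Nat.Partition.restricted n IsModEightPart) := by
  rw [B, Nat.card_eq_fintype_card, Fintype.card_subtype]
  rfl

lemma prod_range_isModEightPart (q : R) (N : ℕ) :
    (∏ i ∈ range (8 * N), if IsModEightPart (i + 1) then 1 - q ^ (i + 1) else 1) =
      qPoch q (q ^ 8) N * qPoch (q ^ 4) (q ^ 8) N * qPoch (q ^ 7) (q ^ 8) N := by
  have residue (i j : ℕ) : (8 * i + j + 1) % 8 = (j + 1) % 8 := by omega
  have qPoch_pow (e : ℕ) : qPoch (q ^ e) (q ^ 8) N = ∏ i ∈ range N, (1 - q ^ (8 * i + e)) :=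
    prod_congr rfl fun i _ => by ring
  have qPoch_one := qPoch_pow 1
  rw [pow_one] at qPoch_one
  rw [prod_range_mul_eq_prod_prod, qPoch_one, qPoch_pow, qPoch_pow]
  simp [prod_range_succ, IsModEightPart, residue]

theorem map_mk_B_mul_qPoch (f : ℤ⟦X⟧ →+* R) {D : ℕ} (hf : f X ^ D = 0) :
    f (mk fun n => (B n : ℤ)) * (qPoch (f X) (f X ^ 8) D * qPoch (f X ^ 4) (f X ^ 8) D *
      qPoch (f X ^ 7) (f X ^ 8) D) = 1 := by
  obtain ⟨M, hM⟩ := Filter.eventually_atTop.1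
    (eventually_X_pow_dvd_mk_card_restricted_mul_prod_sub_one IsModEightPart D)
  obtain ⟨g, hg⟩ := hM (8 * (M + D)) (by omega)
  have h8 : (f X ^ 8) ^ D = 0 := by rw [pow_right_comm, hf, zero_pow (by decide)]
  have stable (a : R) : qPoch a (f X ^ 8) (M + D) = qPoch a (f X ^ 8) D :=
    qPoch_eq_of_le a h8 (Nat.le_add_left D M)
  simp only [← B_eq_card_restricted, prod_range_isModEightPart] at hg
  have mapped := congrArg f hg
  simpa only [map_sub, map_mul, map_pow, map_one, map_qPoch, stable, hf, zero_mul, sub_eq_zero]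
    using mapped

end GeneratingFunctions

/-- **Andrews' theorem**: `C n = B n` for all `n`. -/
theorem andrews_signed (n : ℕ) : C n = B n := by
  let f := Ideal.Quotient.mk (Ideal.span {(PowerSeries.X : PowerSeries ℤ) ^ (n + 1)})
  have hf : f PowerSeries.X ^ (n + 1) = 0 := by
    rw [← map_pow, Ideal.Quotient.eq_zero_iff_mem]
    exact Ideal.mem_span_singleton_self _
  have inverse_C := gollnitz_gordon_of_nilpotent hf
  rw [← map_mk_C f hf] at inverse_C
  have inverse_B := map_mk_B_mul_qPoch f hf
  have congruent := (IsUnit.of_mul_eq_one_right _ inverse_B).mul_right_cancel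
    (inverse_C.trans inverse_B.symm)
  rw [Ideal.Quotient.eq, Ideal.mem_span_singleton, PowerSeries.X_pow_dvd_iff] at congruent
  have coeff_eq := congruent n n.lt_succ_self
  rw [map_sub, PowerSeries.coeff_mk, PowerSeries.coeff_mk, sub_eq_zero] at coeff_eq
  exact_mod_cast coeff_eq
end
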